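/- arXiv:2505.21989 — 4 statements merged into one kernel-verified Lean document; each statement's English description precedes it below -/
import Mathlib

section
/- For all integers β ≥ 1 and n ≥ 0, the number of (2,3)-regular overpartitions satisfies R̄_{2,3}(3^β(3n+2)) ≡ 0 (mod 6). -/
/-- Number of partitions of `a` with no part divisible by `ℓ` or `μ`
(the non-overlined parts of an `(ℓ,μ)`-regular overpartition). -/
def regularCount (ℓ μ a : ℕ) : ℕ :=
  Fintype.card {p : a.Partition // ∀ i ∈ p.parts, ¬ ℓ ∣ i ∧ ¬ μ ∣ i}

/-- Number of partitions of `a` into distinct parts with no part divisible by `ℓ` or `μ`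
(the overlined parts of an `(ℓ,μ)`-regular overpartition). -/
def regularDistinctCount (ℓ μ a : ℕ) : ℕ :=
  Fintype.card {p : a.Partition // p.parts.Nodup ∧ ∀ i ∈ p.parts, ¬ ℓ ∣ i ∧ ¬ μ ∣ i}

/-- `Rbar ℓ μ n` is the number of `(ℓ,μ)`-regular overpartitions of `n`: pairs `(λ, δ)`
where `λ` is a partition, `δ` is a partition into distinct parts, `|λ| + |δ| = n`,
and no part of `λ` or `δ` is divisible by `ℓ` or by `μ`. -/
def Rbar (ℓ μ n : ℕ) : ℕ :=
  ∑ ab ∈ Finset.HasAntidiagonal.antidiagonal n, regularCount ℓ μ ab.1 * regularDistinctCount ℓ μ ab.2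

/-!
Let `G = ∑ Rbar 2 3 n * q ^ n`, and let `φ` be Ramanujan's theta series.

Modulo `2`, overlined and non-overlined parts have inverse generating functions, because
`1 + q ^ i = 1 - q ^ i`; hence `G = 1`.

Modulo `3`, removing the multiples of `3` from a product over odd parts divides it by its cube, so
that `G` is the inverse square of `∏ (1 + q ^ i) / (1 - q ^ i)`, `i` odd, and Gauss's product
`φ(±q) = ∏ (1 - q ^ (2 * k)) * ∏ (1 ± q ^ (2 * k - 1)) ^ 2` gives `G = φ(-q) / φ(q)`.
Put `A = φ(q)` and `B = φ(-q)`. The series `A ^ 4 = φ(q) * φ(q ^ 3)` counts the representations by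
`x ^ 2 + 3 * y ^ 2`; for an even positive number these come in threes, permuted by the cube roots of
unity of `ℤ[ω]`. Therefore `A ^ 4 + B ^ 4 = 2`, and
`G * (A * B) ^ 3 = A ^ 2 * B ^ 4 = -(A ^ 2 + A ^ 6)`.
The operator `U₃`, which keeps the exponents divisible by `3`, lets cubes out of a product as their
cube roots. It maps `A ^ 2` to `A ^ 6`, because `3 ∣ x ^ 2 + y ^ 2` forces `3 ∣ x` and `3 ∣ y`, and
`A ^ 6` to `A ^ 2`. This leaves `U₃ G = A * B ^ 3 = φ(q) * φ(-q ^ 3)`, whose coefficient at `N`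
vanishes unless `N = x ^ 2 + 3 * y ^ 2`, and `3 ^ k * (3 * n + 2)` is not of that form.
-/

section QBinomial

open Finset

/-- The Gaussian binomial coefficient `[n, k]_q`, as in the `q`-binomial theorem. It is defined by
the `q`-Pascal recursion, which makes sense in any commutative semiring, without division. -/
def gaussBinom {R : Type*} [CommSemiring R] (q : R) : ℕ → ℕ → R
  | _, 0 => 1
  | 0, _ + 1 => 0
  | n + 1, k + 1 => gaussBinom q n k + q ^ (k + 1) * gaussBinom q n (k + 1)

section CommSemiring

variable {R : Type*} [CommSemiring R] (q : R)

@[simp]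
lemma gaussBinom_zero_right (n : ℕ) : gaussBinom q n 0 = 1 := by
  cases n <;> rfl

lemma gaussBinom_succ_succ (n k : ℕ) :
    gaussBinom q (n + 1) (k + 1) = gaussBinom q n k + q ^ (k + 1) * gaussBinom q n (k + 1) :=
  rfl

lemma gaussBinom_eq_zero_of_lt {n k : ℕ} (h : n < k) : gaussBinom q n k = 0 := by
  induction n generalizing k with
  | zero => obtain ⟨k, rfl⟩ := Nat.exists_eq_add_one_of_ne_zero h.ne'; rfl
  | succ n ih =>
    obtain ⟨k, rfl⟩ := Nat.exists_eq_add_one_of_ne_zero (Nat.ne_zero_of_lt h)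
    rw [gaussBinom_succ_succ, ih (by omega), ih (by omega), mul_zero, add_zero]

theorem prod_range_add_pow_mul_eq_sum_gaussBinom (x y : R) (n : ℕ) :
    ∏ i ∈ range n, (x + q ^ i * y) =
      ∑ k ∈ range (n + 1), gaussBinom q n k * q ^ k.choose 2 * x ^ (n - k) * y ^ k := by
  induction n generalizing y with
  | zero => simp
  | succ n ih =>
    have hshift : ∏ i ∈ range n, (x + q ^ (i + 1) * y) =
        ∑ k ∈ range (n + 1), gaussBinom q n k * q ^ k.choose 2 * x ^ (n - k) * (q * y) ^ k := by
      rw [← ih]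
      exact prod_congr rfl fun i _ => by ring
    have hx : (∑ k ∈ range (n + 1), gaussBinom q n k * q ^ k.choose 2 * x ^ (n - k) * (q * y) ^ k)
          * x =
        ∑ k ∈ range (n + 1), q ^ (k + 1) * gaussBinom q n (k + 1) * q ^ (k + 1).choose 2
          * x ^ (n - k) * y ^ (k + 1) + x ^ (n + 1) := by
      rw [sum_range_succ', sum_range_succ _ n, gaussBinom_eq_zero_of_lt q n.lt_succ_self, add_mul,
        sum_mul]
      congr 1
      · simp only [mul_zero, zero_mul, add_zero]
        refine sum_congr rfl fun k hk => ?_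
        rw [mem_range] at hk
        rw [show n - k = n - (k + 1) + 1 by omega]
        ring
      · simp [pow_succ]
    have hy : (∑ k ∈ range (n + 1), gaussBinom q n k * q ^ k.choose 2 * x ^ (n - k) * (q * y) ^ k)
          * y =
        ∑ k ∈ range (n + 1), gaussBinom q n k * q ^ (k + 1).choose 2
          * x ^ (n - k) * y ^ (k + 1) := by
      rw [sum_mul]
      refine sum_congr rfl fun k _ => ?_
      rw [Nat.choose_succ_succ' k 1, Nat.choose_one_right]
      ring
    rw [prod_range_succ', hshift, pow_zero, one_mul, mul_add, hx, hy, sum_range_succ' _ (n + 1),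
      add_right_comm, ← sum_add_distrib]
    congr 1
    · refine sum_congr rfl fun k _ => ?_
      rw [gaussBinom_succ_succ, Nat.add_sub_add_right]
      ring
    · simp

lemma prod_range_pow_odd (n : ℕ) : ∏ i ∈ range n, q ^ (2 * i + 1) = q ^ n ^ 2 := by
  rw [prod_pow_eq_pow_sum]
  congr 1
  induction n with
  | zero => rfl
  | succ n ih => rw [sum_range_succ, ih]; ring

lemma prod_range_pow_add_sq_pow_mul (n : ℕ) :
    ∏ i ∈ range (2 * n), (q ^ (2 * n) + (q ^ 2) ^ i * q) =
      q ^ (3 * n ^ 2) * (∏ k ∈ range n, (1 + q ^ (2 * k + 1))) ^ 2 := by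
  have hlow : ∏ i ∈ range n, (q ^ (2 * n) + (q ^ 2) ^ i * q) =
      q ^ n ^ 2 * ∏ k ∈ range n, (1 + q ^ (2 * k + 1)) := by
    rw [← prod_range_reflect (fun k => 1 + q ^ (2 * k + 1)), ← prod_range_pow_odd,
      ← prod_mul_distrib]
    refine prod_congr rfl fun i hi => ?_
    rw [mem_range] at hi
    rw [mul_add, ← pow_add, show 2 * i + 1 + (2 * (n - 1 - i) + 1) = 2 * n by omega]
    ring
  have hhigh : ∏ i ∈ range n, (q ^ (2 * n) + (q ^ 2) ^ (n + i) * q) =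
      q ^ (2 * n ^ 2) * ∏ k ∈ range n, (1 + q ^ (2 * k + 1)) := by
    rw [show q ^ (2 * n ^ 2) = ∏ _i ∈ range n, q ^ (2 * n) by rw [prod_const, card_range]; ring,
      ← prod_mul_distrib]
    exact prod_congr rfl fun i _ => by ring
  rw [two_mul n, prod_range_add, ← two_mul, hlow, hhigh]
  ring

lemma two_mul_choose_two_add_mul_sub_add {n k : ℕ} (hk : k ≤ 2 * n) :
    2 * k.choose 2 + 2 * n * (2 * n - k) + k = 3 * n ^ 2 + ((k : ℤ) - n).natAbs ^ 2 := by
  have hchoose : 2 * k.choose 2 + k = k ^ 2 := by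
    rw [Nat.choose_two_right, Nat.two_mul_div_two_of_even (Nat.even_mul_pred_self k)]
    cases k with
    | zero => rfl
    | succ k => rw [Nat.add_sub_cancel]; ring
  zify [hk] at hchoose ⊢
  rw [sq_abs]
  linear_combination hchoose

variable {q} in
/-- The `q`-binomial theorem at base `q ^ 2`, `x = q ^ (2 * n)`, `y = q`, after cancelling
`q ^ (3 * n ^ 2)`. -/
theorem prod_range_one_add_pow_odd_sq (hq : IsLeftRegular q) (n : ℕ) :
    (∏ k ∈ range n, (1 + q ^ (2 * k + 1))) ^ 2 =
      ∑ k ∈ range (2 * n + 1), gaussBinom (q ^ 2) (2 * n) k * q ^ ((k : ℤ) - n).natAbs ^ 2 := by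
  apply hq.pow (3 * n ^ 2)
  dsimp only
  rw [← prod_range_pow_add_sq_pow_mul, prod_range_add_pow_mul_eq_sum_gaussBinom, mul_sum]
  refine sum_congr rfl fun k hk => ?_
  rw [mul_left_comm, ← pow_add,
    ← two_mul_choose_two_add_mul_sub_add (Nat.lt_succ_iff.mp (mem_range.mp hk))]
  ring

end CommSemiring

section CommRing

variable {R : Type*} [CommRing R] (q : R)

/-- The finite `q`-Pochhammer symbol `(q; q)_n`, of which Gaussian binomials are quotients. -/
def qPochhammer (n : ℕ) : R := ∏ i ∈ range n, (1 - q ^ (i + 1))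

lemma qPochhammer_succ (n : ℕ) :
    qPochhammer q (n + 1) = qPochhammer q n * (1 - q ^ (n + 1)) :=
  prod_range_succ _ n

theorem gaussBinom_mul_qPochhammer_mul_qPochhammer (m k : ℕ) :
    gaussBinom q (m + k) k * qPochhammer q k * qPochhammer q m = qPochhammer q (m + k) := by
  induction k generalizing m with
  | zero => simp [qPochhammer]
  | succ k ihk =>
    induction m with
    | zero =>
      have hk := ihk 0
      simp only [zero_add] at hk ⊢
      rw [gaussBinom_succ_succ, gaussBinom_eq_zero_of_lt q k.lt_succ_self, qPochhammer_succ]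
      linear_combination (1 - q ^ (k + 1)) * hk
    | succ m ihm =>
      have hk := ihk (m + 1)
      rw [show m + 1 + k = m + (k + 1) by ring] at hk
      rw [add_right_comm, gaussBinom_succ_succ, qPochhammer_succ q (m + (k + 1))]
      rw [qPochhammer_succ q m] at hk ⊢
      rw [qPochhammer_succ q k] at ihm ⊢
      linear_combination (1 - q ^ (k + 1)) * hk + q ^ (k + 1) * (1 - q ^ (m + 1)) * ihm

lemma pow_succ_dvd_qPochhammer_sub {m n : ℕ} (h : m ≤ n) :
    q ^ (m + 1) ∣ qPochhammer q n - qPochhammer q m := by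
  induction n, h using Nat.le_induction with
  | base => simp
  | succ n hmn ih =>
    rw [qPochhammer_succ, show qPochhammer q n * (1 - q ^ (n + 1)) - qPochhammer q m =
      qPochhammer q n - qPochhammer q m - qPochhammer q n * q ^ (n + 1) by ring]
    exact ih.sub ((pow_dvd_pow q (by omega)).mul_left _)

lemma pow_succ_dvd_gaussBinom_mul_qPochhammer_sub_one {a m k n : ℕ}
    (hunit : IsUnit (qPochhammer q m)) (hm : a ≤ m) (hk : a ≤ k) (hn : a ≤ n) :
    q ^ (a + 1) ∣ gaussBinom q (m + k) k * qPochhammer q n - 1 := by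
  have hdvd {i j : ℕ} (hi : a ≤ i) (hj : a ≤ j) :
      q ^ (a + 1) ∣ qPochhammer q i - qPochhammer q j := by
    simpa using (pow_succ_dvd_qPochhammer_sub q hi).sub (pow_succ_dvd_qPochhammer_sub q hj)
  rw [← hunit.dvd_mul_left]
  convert (hdvd (hm.trans (Nat.le_add_right m k)) hm).add
    ((hdvd hn hk).mul_left (gaussBinom q (m + k) k * qPochhammer q m)) using 1
  linear_combination gaussBinom_mul_qPochhammer_mul_qPochhammer q m k

end CommRing

end QBinomial

section FiberSeries

open PowerSeries Finset

variable {ι κ : Type*}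

lemma preimage_fst_add_snd_eq_biUnion (f : ι → ℕ) (g : κ → ℕ) (n : ℕ) :
    (fun p : ι × κ => f p.1 + g p.2) ⁻¹' {n} =
      ⋃ a ∈ (antidiagonal n : Set (ℕ × ℕ)), (f ⁻¹' {a.1}) ×ˢ (g ⁻¹' {a.2}) := by
  ext p
  simp

lemma finite_preimage_fst_add_snd {f : ι → ℕ} {g : κ → ℕ}
    (hf : ∀ n, (f ⁻¹' {n}).Finite) (hg : ∀ n, (g ⁻¹' {n}).Finite) (n : ℕ) :
    ((fun p : ι × κ => f p.1 + g p.2) ⁻¹' {n}).Finite := by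
  rw [preimage_fst_add_snd_eq_biUnion]
  exact (finite_toSet _).biUnion fun a _ => (hf a.1).prod (hg a.2)

variable (R : Type*) [Semiring R]

/-- The generating function `∑ i, X ^ f i` of a family of exponents `f`. A coefficient at which `f`
has an infinite fibre is the junk value `0`. -/
noncomputable def fiberSeries (f : ι → ℕ) : R⟦X⟧ :=
  PowerSeries.mk fun n => ((f ⁻¹' {n}).ncard : R)

@[simp]
lemma coeff_fiberSeries (f : ι → ℕ) (n : ℕ) :
    coeff n (fiberSeries R f) = ((f ⁻¹' {n}).ncard : R) :=
  coeff_mk _ _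

theorem fiberSeries_mul_fiberSeries {f : ι → ℕ} {g : κ → ℕ}
    (hf : ∀ n, (f ⁻¹' {n}).Finite) (hg : ∀ n, (g ⁻¹' {n}).Finite) :
    fiberSeries R f * fiberSeries R g = fiberSeries R fun p : ι × κ => f p.1 + g p.2 := by
  ext n
  have hdisj : (antidiagonal n : Set (ℕ × ℕ)).PairwiseDisjoint
      fun a => (f ⁻¹' {a.1}) ×ˢ (g ⁻¹' {a.2}) := by
    refine fun a _ b _ hab => Set.disjoint_left.mpr fun p hp hp' => hab ?_
    simp only [Set.mem_prod, Set.mem_preimage, Set.mem_singleton_iff] at hp hp'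
    exact Prod.ext (hp.1.symm.trans hp'.1) (hp.2.symm.trans hp'.2)
  simp only [coeff_mul, coeff_fiberSeries]
  rw [preimage_fst_add_snd_eq_biUnion, Set.Finite.ncard_biUnion (finite_toSet _)
    (fun a _ => (hf a.1).prod (hg a.2)) hdisj, finsum_mem_coe_finset]
  simp [Set.ncard_prod]

/-- Atkin's operator `U_m`, sending `∑ aₙ X ^ n` to `∑ a_{mn} X ^ n`; it keeps the exponents
divisible by `m`. -/
noncomputable def atkinU (m : ℕ) : R⟦X⟧ →ₗ[R] R⟦X⟧ where
  toFun f := PowerSeries.mk fun n => coeff (m * n) f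
  map_add' f g := by ext; simp
  map_smul' c f := by ext; simp

variable {R}

@[simp]
lemma coeff_atkinU (m n : ℕ) (f : R⟦X⟧) : coeff n (atkinU R m f) = coeff (m * n) f := by
  simp [atkinU]

lemma atkinU_one {m : ℕ} (hm : m ≠ 0) : atkinU R m 1 = 1 := by
  ext n
  simp [coeff_one, hm]

theorem atkinU_fiberSeries {m : ℕ} {f : ι → ℕ} {g : κ → ℕ} {e : κ → ι} (he : e.Injective)
    (hfe : ∀ j, f (e j) = m * g j) (hmem : ∀ i, m ∣ f i → i ∈ Set.range e) (hm : m ≠ 0) :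
    atkinU R m (fiberSeries R f) = fiberSeries R g := by
  ext n
  have hfiber : f ⁻¹' {m * n} = e '' (g ⁻¹' {n}) := by
    ext i
    constructor
    · intro hi
      obtain ⟨j, rfl⟩ := hmem i ⟨n, hi⟩
      exact ⟨j, Nat.eq_of_mul_eq_mul_left (Nat.pos_of_ne_zero hm) ((hfe j).symm.trans hi), rfl⟩
    · rintro ⟨j, rfl, rfl⟩
      exact hfe j
  rw [coeff_atkinU, coeff_fiberSeries, coeff_fiberSeries, hfiber, Set.ncard_image_of_injective _ he]

end FiberSeries

section Expand

open PowerSeries Finset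

lemma expand_fiberSeries (R : Type*) [CommRing R] {ι : Type*} {m : ℕ} (hm : m ≠ 0)
    (f : ι → ℕ) : expand m hm (fiberSeries R f) = fiberSeries R fun i => m * f i := by
  ext n
  rw [coeff_expand]
  split_ifs with h
  · obtain ⟨n, rfl⟩ := h
    have hfiber : (fun i => m * f i) ⁻¹' {m * n} = f ⁻¹' {n} := by
      ext i
      simp [hm]
    rw [Nat.mul_div_cancel_left _ (Nat.pos_of_ne_zero hm), coeff_fiberSeries, coeff_fiberSeries,
      hfiber]
  · have hfiber : (fun i => m * f i) ⁻¹' {n} = ∅ :=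
      Set.eq_empty_of_forall_notMem fun i hi => h ⟨f i, Eq.symm hi⟩
    rw [coeff_fiberSeries, hfiber, Set.ncard_empty, Nat.cast_zero]

theorem atkinU_mul_expand {R : Type*} [CommRing R] {m : ℕ} (hm : m ≠ 0) (f g : R⟦X⟧) :
    atkinU R m (f * expand m hm g) = atkinU R m f * g := by
  ext n
  simp only [coeff_atkinU, coeff_mul]
  symm
  refine sum_of_injOn (fun a => (m * a.1, m * a.2)) ?_ ?_ ?_ ?_
  · intro a _ b _ hab
    simpa [Prod.ext_iff, hm] using hab
  · intro a ha
    simp_all [← mul_add]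
  · rintro ⟨i, j⟩ hij hnot
    rw [coeff_expand_of_not_dvd, mul_zero]
    rintro ⟨j, rfl⟩
    rw [HasAntidiagonal.mem_antidiagonal] at hij
    obtain ⟨i, rfl⟩ : m ∣ i := (Nat.dvd_add_left (dvd_mul_right m j)).mp ⟨n, hij⟩
    refine hnot ⟨(i, j), ?_, rfl⟩
    rw [← mul_add] at hij
    simpa [hm] using hij
  · intro a _
    simp [coeff_expand_mul]

lemma pow_char_eq_expand {p : ℕ} [hp : Fact p.Prime] (f : (ZMod p)⟦X⟧) :
    f ^ p = expand p hp.out.ne_zero f := by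
  have h := MvPowerSeries.map_frobenius_expand p hp.out.ne_zero (f := f)
  rw [ZMod.frobenius_zmod] at h
  rw [← h]
  exact congrFun (congrArg DFunLike.coe MvPowerSeries.map_id) _

theorem atkinU_mul_pow_char {p : ℕ} [hp : Fact p.Prime] (f g : (ZMod p)⟦X⟧) :
    atkinU (ZMod p) p (f * g ^ p) = atkinU (ZMod p) p f * g := by
  rw [pow_char_eq_expand, atkinU_mul_expand]

end Expand

section Theta

open PowerSeries Finset

lemma finite_preimage_of_natAbs_le {f : ℤ → ℕ} (hf : ∀ x, x.natAbs ≤ f x) (n : ℕ) :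
    (f ⁻¹' {n}).Finite := by
  refine (Set.finite_Icc (-n : ℤ) n).subset fun x (hx : f x = n) => ?_
  have := hf x
  rw [Set.mem_Icc]
  omega

lemma finite_preimage_natAbs_sq (n : ℕ) : ((fun x : ℤ => x.natAbs ^ 2) ⁻¹' {n}).Finite :=
  finite_preimage_of_natAbs_le (fun x => Nat.le_self_pow two_ne_zero x.natAbs) n

lemma finite_preimage_mul_natAbs_sq {m : ℕ} (hm : m ≠ 0) (n : ℕ) :
    ((fun x : ℤ => m * x.natAbs ^ 2) ⁻¹' {n}).Finite :=
  finite_preimage_of_natAbs_le (fun x => (Nat.le_self_pow two_ne_zero x.natAbs).trans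
    (Nat.le_mul_of_pos_left _ (Nat.pos_of_ne_zero hm))) n

variable (R : Type*) [CommRing R]

/-- Ramanujan's theta series `φ(q) = ∑ q ^ (x ^ 2)`, summed over all integers `x`. Its products
enumerate the values of diagonal quadratic forms; `φ(c * q)` is written `rescale c (theta R)`. -/
noncomputable def theta : R⟦X⟧ := fiberSeries R fun x : ℤ => x.natAbs ^ 2

lemma coeff_theta_eq_zero {n : ℕ} (hn : ∀ x, x ^ 2 ≠ n) : coeff n (theta R) = 0 := by
  have hfiber : (fun x : ℤ => x.natAbs ^ 2) ⁻¹' {n} = ∅ :=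
    Set.eq_empty_of_forall_notMem fun x hx => hn _ hx
  rw [theta, coeff_fiberSeries, hfiber, Set.ncard_empty, Nat.cast_zero]

@[simp]
lemma constantCoeff_theta : constantCoeff (theta R) = 1 := by
  have hfiber : (fun x : ℤ => x.natAbs ^ 2) ⁻¹' {0} = {0} := by
    ext x
    simp
  rw [← coeff_zero_eq_constantCoeff_apply, theta, coeff_fiberSeries, hfiber, Set.ncard_singleton,
    Nat.cast_one]

lemma theta_mul_theta :
    theta R * theta R = fiberSeries R fun v : ℤ × ℤ => v.1.natAbs ^ 2 + v.2.natAbs ^ 2 :=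
  fiberSeries_mul_fiberSeries R finite_preimage_natAbs_sq finite_preimage_natAbs_sq

lemma theta_mul_expand_theta {m : ℕ} (hm : m ≠ 0) :
    theta R * expand m hm (theta R) =
      fiberSeries R fun v : ℤ × ℤ => v.1.natAbs ^ 2 + m * v.2.natAbs ^ 2 := by
  rw [theta, expand_fiberSeries, fiberSeries_mul_fiberSeries R finite_preimage_natAbs_sq
    (finite_preimage_mul_natAbs_sq hm)]

variable {R} in
lemma coeff_theta_mul_expand_rescale_theta_eq_zero (c : R) {m n : ℕ} (hm : m ≠ 0)
    (hn : ∀ x y, x ^ 2 + m * y ^ 2 ≠ n) :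
    coeff n (theta R * expand m hm (rescale c (theta R))) = 0 := by
  rw [coeff_mul]
  refine sum_eq_zero fun a ha => ?_
  rw [HasAntidiagonal.mem_antidiagonal] at ha
  by_cases hx : ∃ x, x ^ 2 = a.1
  swap
  · rw [coeff_theta_eq_zero R (not_exists.mp hx), zero_mul]
  by_cases hdvd : m ∣ a.2
  swap
  · rw [coeff_expand_of_not_dvd _ _ _ hdvd, mul_zero]
  obtain ⟨x, hx⟩ := hx
  obtain ⟨b, hb⟩ := hdvd
  have hb0 : coeff b (theta R) = 0 :=
    coeff_theta_eq_zero R fun y hy => hn x y (by rw [hx, hy, ← hb, ha])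
  rw [hb, coeff_expand_mul, coeff_rescale, hb0, mul_zero, mul_zero]

lemma X_pow_succ_dvd_sum_range_sub_theta (n : ℕ) :
    (X : R⟦X⟧) ^ (n + 1) ∣ ∑ k ∈ range (2 * n + 1), X ^ ((k : ℤ) - n).natAbs ^ 2 - theta R := by
  refine X_pow_dvd_iff.mpr fun m hm => ?_
  have hfiber : (fun x : ℤ => x.natAbs ^ 2) ⁻¹' {m} =
      image (fun k : ℕ => (k : ℤ) - n)
        ((range (2 * n + 1)).filter fun k => m = ((k : ℤ) - n).natAbs ^ 2) := by
    ext x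
    simp only [Set.mem_preimage, Set.mem_singleton_iff, coe_image, coe_filter, mem_range,
      Set.mem_image, Set.mem_ofPred_eq]
    constructor
    · intro hx
      have := Nat.le_self_pow two_ne_zero x.natAbs
      refine ⟨(x + n).toNat, ⟨by omega, ?_⟩, by omega⟩
      rw [← hx, Int.toNat_of_nonneg (by omega), add_sub_cancel_right]
    · rintro ⟨k, ⟨-, hk⟩, rfl⟩
      exact hk.symm
  have hinj : Function.Injective fun k : ℕ => (k : ℤ) - n := fun a b hab => by
    simpa using hab
  rw [map_sub, map_sum, theta, coeff_fiberSeries, hfiber, Set.ncard_coe_finset,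
    card_image_of_injective _ hinj]
  simp [coeff_X_pow]

lemma isUnit_qPochhammer_X_sq (n : ℕ) : IsUnit (qPochhammer (X ^ 2 : R⟦X⟧) n) := by
  rw [isUnit_iff_constantCoeff]
  simp [qPochhammer]

theorem X_pow_succ_dvd_qPochhammer_mul_prod_sq_sub_theta (n : ℕ) :
    (X : R⟦X⟧) ^ (n + 1) ∣
      qPochhammer (X ^ 2) n * (∏ k ∈ range n, (1 + X ^ (2 * k + 1))) ^ 2 - theta R := by
  have hX : IsLeftRegular (X : R⟦X⟧) := fun _ _ => X_mul_cancel
  have hterm (k : ℕ) (hk : k ∈ range (2 * n + 1)) : (X : R⟦X⟧) ^ (n + 1) ∣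
      (gaussBinom (X ^ 2) (2 * n) k * qPochhammer (X ^ 2) n - 1) *
        X ^ ((k : ℤ) - n).natAbs ^ 2 := by
    obtain ⟨m, hm⟩ := Nat.exists_eq_add_of_le' (Nat.lt_succ_iff.mp (mem_range.mp hk))
    have hd : ((k : ℤ) - n).natAbs ≤ n := by omega
    have hdvd := pow_succ_dvd_gaussBinom_mul_qPochhammer_sub_one (X ^ 2 : R⟦X⟧)
      (isUnit_qPochhammer_X_sq R m) (a := n - ((k : ℤ) - n).natAbs) (k := k) (n := n)
      (by omega) (by omega) (by omega)
    rw [← hm, ← pow_mul] at hdvd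
    refine Dvd.dvd.trans ?_ (mul_dvd_mul_right hdvd _)
    rw [← pow_add]
    refine pow_dvd_pow X ?_
    generalize ((k : ℤ) - n).natAbs = d at hd
    zify [hd]
    nlinarith [sq_nonneg ((d : ℤ) - 1)]
  rw [prod_range_one_add_pow_odd_sq hX]
  convert (dvd_sum hterm).add (X_pow_succ_dvd_sum_range_sub_theta R n) using 1
  rw [← add_sub_assoc, ← sum_add_distrib, mul_sum]
  exact congrArg (· - theta R) (sum_congr rfl fun k _ => by ring)

variable {R} in
theorem X_pow_succ_dvd_qPochhammer_mul_prod_sq_sub_rescale_theta {c : R} (hc : c ^ 2 = 1) (n : ℕ) :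
    X ^ (n + 1) ∣ qPochhammer (X ^ 2) n * (∏ k ∈ range n, (1 + C c * X ^ (2 * k + 1))) ^ 2 -
      rescale c (theta R) := by
  have hC : (C c : R⟦X⟧) ^ 2 = 1 := by rw [← map_pow, hc, map_one]
  have hodd (k : ℕ) : (C c : R⟦X⟧) ^ (2 * k + 1) = C c := by
    rw [pow_succ, pow_mul, hC, one_pow, one_mul]
  have h := map_dvd (rescale c) (X_pow_succ_dvd_qPochhammer_mul_prod_sq_sub_theta R n)
  simp only [qPochhammer, map_sub, map_mul, map_pow, map_prod, map_add, map_one, rescale_X, mul_pow,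
    hC, one_mul, hodd] at h
  exact (dvd_mul_left _ _).trans h

end Theta

section PartProd

open PowerSeries Finset Filter Topology
open scoped PowerSeries.WithPiTopology

variable {R : Type*} [CommRing R] [TopologicalSpace R]

lemma tendsto_of_forall_X_pow_succ_dvd_sub {a : ℕ → R⟦X⟧} {b : R⟦X⟧}
    (h : ∀ n, X ^ (n + 1) ∣ a n - b) : Tendsto a atTop (𝓝 b) := by
  rw [WithPiTopology.tendsto_iff_coeff_tendsto]
  refine fun d => tendsto_atTop_of_eventually_const fun n (hn : d ≤ n) => ?_
  rw [← sub_eq_zero, ← map_sub]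
  exact X_pow_dvd_iff.mp (h n) d (Nat.lt_succ_iff.mpr hn)

/-- The infinite product `∏ (1 + c * X ^ i)` over the positive integers `i` satisfying `q`. For
`c = 1` it enumerates partitions into distinct parts satisfying `q`, for `c = -1` it is the inverse
of the generating function of all partitions into such parts. -/
noncomputable def partProd (q : ℕ → Prop) [DecidablePred q] (c : R) : R⟦X⟧ :=
  ∏' i : ℕ, if q (i + 1) then 1 + C c * X ^ (i + 1) else 1

lemma multipliable_partProd (q : ℕ → Prop) [DecidablePred q] (c : R) :
    Multipliable fun i : ℕ => if q (i + 1) then 1 + C c * (X : R⟦X⟧) ^ (i + 1) else 1 := by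
  have h : Multipliable fun i : ℕ => 1 + if q (i + 1) then C c * (X : R⟦X⟧) ^ (i + 1) else 0 := by
    refine WithPiTopology.multipliable_one_add_of_tendsto_order_atTop_nhds_top R
      (ENat.tendsto_nhds_top_iff_natCast_lt.mpr fun n =>
        eventually_atTop.mpr ⟨n, fun i hi => ?_⟩)
    split_ifs
    · have hlt : (n : ℕ∞) < (i + 1 : ℕ) := by exact_mod_cast Nat.lt_succ_of_le hi
      exact hlt.trans_le (le_order _ _ fun j hj => by
        rw [coeff_C_mul, coeff_X_pow, if_neg (by rintro rfl; exact hj.false), mul_zero])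
    · simp
  convert h using 2 with i
  split_ifs <;> simp

lemma hasProd_partProd (q : ℕ → Prop) [DecidablePred q] (c : R) :
    HasProd (fun i : ℕ => if q (i + 1) then 1 + C c * (X : R⟦X⟧) ^ (i + 1) else 1)
      (partProd q c) :=
  (multipliable_partProd q c).hasProd

lemma hasProd_partProd_comp {q : ℕ → Prop} [DecidablePred q] (c : R) {g : ℕ → ℕ}
    (hg : g.Injective) (hq : ∀ i, q (i + 1) → i ∈ Set.range g) :
    HasProd (fun k : ℕ => if q (g k + 1) then 1 + C c * (X : R⟦X⟧) ^ (g k + 1) else 1)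
      (partProd q c) := by
  have h := hasProd_partProd q c
  rw [← hg.hasProd_iff fun i hi => if_neg fun h => hi (hq i h)] at h
  exact h

variable [T2Space R]

lemma isUnit_partProd (q : ℕ → Prop) [DecidablePred q] (c : R) : IsUnit (partProd q c) := by
  have h := (multipliable_partProd q c).map_tprod (constantCoeff (R := R))
    (WithPiTopology.continuous_constantCoeff R)
  rw [isUnit_iff_constantCoeff, partProd, h]
  simp [apply_ite]

variable [IsTopologicalRing R]

theorem partProd_even_mul_partProd_odd_sq {c : R} (hc : c ^ 2 = 1) :
    partProd (2 ∣ ·) (-1) * partProd (¬ 2 ∣ ·) c ^ 2 = rescale c (theta R) := by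
  have heven : Tendsto (fun n => qPochhammer (X ^ 2 : R⟦X⟧) n) atTop
      (𝓝 (partProd (2 ∣ ·) (-1))) := by
    have h := hasProd_partProd_comp (q := (2 ∣ ·)) (-1 : R) (g := fun k => 2 * k + 1)
      (fun a b hab => by simpa using hab) fun i hi => ⟨i / 2, by dsimp only; omega⟩
    refine h.tendsto_prod_nat.congr fun n => prod_congr rfl fun k _ => ?_
    rw [if_pos ⟨k + 1, by ring⟩, ← pow_mul]
    simp [sub_eq_add_neg, mul_add]
  have hodd : Tendsto (fun n => ∏ k ∈ range n, (1 + C c * (X : R⟦X⟧) ^ (2 * k + 1))) atTop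
      (𝓝 (partProd (¬ 2 ∣ ·) c)) := by
    have h := hasProd_partProd_comp (q := (¬ 2 ∣ ·)) c (g := fun k => 2 * k)
      (fun a b hab => by simpa using hab) fun i hi => ⟨i / 2, by dsimp only; omega⟩
    refine h.tendsto_prod_nat.congr fun n => prod_congr rfl fun k _ => ?_
    rw [if_pos (by omega)]
  exact tendsto_nhds_unique (heven.mul (hodd.pow 2)) (tendsto_of_forall_X_pow_succ_dvd_sub
    (X_pow_succ_dvd_qPochhammer_mul_prod_sq_sub_rescale_theta hc))

lemma partProd_and_not_mul_partProd_and (q r : ℕ → Prop) [DecidablePred q] [DecidablePred r]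
    (c : R) :
    partProd (fun i => q i ∧ ¬ r i) c * partProd (fun i => q i ∧ r i) c = partProd q c := by
  refine ((hasProd_partProd _ c).mul (hasProd_partProd _ c)).unique ?_
  convert hasProd_partProd q c using 2 with i
  by_cases hq : q (i + 1) <;> by_cases hr : r (i + 1) <;> simp [hq, hr]

end PartProd

section PrimeRemoval

open PowerSeries

variable {p : ℕ} [hp : Fact p.Prime] [TopologicalSpace (ZMod p)] [IsTopologicalRing (ZMod p)]
  [T2Space (ZMod p)]

open scoped PowerSeries.WithPiTopology in
lemma partProd_pow_char {q : ℕ → Prop} [DecidablePred q] (hq : ∀ i, q (p * i) ↔ q i) (c : ZMod p) :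
    partProd q c ^ p = partProd (fun i => q i ∧ p ∣ i) c := by
  have hpos := hp.out.pos
  have hmul (i : ℕ) : p * i + (p - 1) + 1 = p * (i + 1) := by rw [mul_add, mul_one]; omega
  have h := hasProd_partProd_comp (q := fun i => q i ∧ p ∣ i) c (g := fun i => p * i + (p - 1))
    (fun i j hij => by simpa [hpos.ne'] using hij) <| by
      rintro i ⟨-, j, hj⟩
      obtain ⟨j, rfl⟩ := Nat.exists_eq_add_one_of_ne_zero (n := j) (by rintro rfl; simp at hj)
      exact ⟨j, Nat.succ_injective ((hmul j).trans hj.symm)⟩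
  rw [← h.tprod_eq, partProd, ← (multipliable_partProd q c).tprod_pow]
  refine tprod_congr fun i => ?_
  simp only [hmul, hq, dvd_mul_right, and_true]
  split_ifs
  · rw [pow_char_eq_expand, map_add, map_one, map_mul, expand_C, map_pow, expand_X, ← pow_mul]
  · rw [one_pow]

theorem partProd_and_not_dvd_mul_pow {q : ℕ → Prop} [DecidablePred q] (hq : ∀ i, q (p * i) ↔ q i)
    (c : ZMod p) : partProd (fun i => q i ∧ ¬ p ∣ i) c * partProd q c ^ (p - 1) = 1 := by
  refine (isUnit_partProd q c).mul_right_cancel ?_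
  rw [mul_assoc, ← pow_succ, Nat.sub_add_cancel hp.out.one_le, partProd_pow_char hq,
    partProd_and_not_mul_partProd_and, one_mul]

end PrimeRemoval

section GeneratingFunction

open PowerSeries Finset
open scoped PowerSeries.WithPiTopology

variable (R : Type*) [CommRing R] [TopologicalSpace R] [T2Space R]

theorem mk_card_nodup_restricted_eq_partProd (q : ℕ → Prop) [DecidablePred q] :
    (PowerSeries.mk fun n => (#{π : n.Partition | π.parts.Nodup ∧ ∀ i ∈ π.parts, q i} : R)) =
      partProd q 1 := by
  refine HasProd.unique ?_ (hasProd_partProd q 1)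
  convert! Nat.Partition.hasProd_genFun
    (fun i c => if c < 2 ∧ q i then (1 : R) else 0) using 1
  · ext1 i
    rw [tsum_eq_single 0 fun b hb => by rw [if_neg (by omega), zero_smul]]
    split_ifs <;> simp_all
  · ext n
    simp only [Nat.Partition.genFun, coeff_mk, card_filter, Nat.cast_sum]
    refine sum_congr rfl fun π _ => ?_
    have hiff : (π.parts.Nodup ∧ ∀ i ∈ π.parts, q i) ↔
        ∀ i ∈ π.parts, π.parts.count i < 2 ∧ q i := by
      rw [Multiset.nodup_iff_count_le_one]
      refine ⟨fun h i hi => ⟨Nat.lt_succ_iff.mpr (h.1 i), h.2 i hi⟩,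
        fun h => ⟨fun i => ?_, fun i hi => (h i hi).2⟩⟩
      by_cases hi : i ∈ π.parts
      · exact Nat.lt_succ_iff.mp (h i hi).1
      · rw [Multiset.count_eq_zero_of_notMem hi]
        exact zero_le_one
    simp [Finsupp.prod, prod_boole, hiff]

variable [IsTopologicalRing R]

theorem mk_card_restricted_mul_partProd_neg_one (q : ℕ → Prop) [DecidablePred q] :
    (PowerSeries.mk fun n => ((Nat.Partition.restricted n q).card : R)) * partProd q (-1) = 1 := by
  refine ((Nat.Partition.hasProd_powerSeriesMk_card_restricted R q).mul
    (hasProd_partProd q (-1))).unique ?_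
  convert hasProd_one using 2 with i
  split_ifs
  · have hgeom := WithPiTopology.tsum_pow_mul_one_sub_of_constantCoeff_eq_zero
      (f := (X : R⟦X⟧) ^ (i + 1)) (by simp)
    simp only [← pow_mul] at hgeom
    simpa [sub_eq_add_neg] using hgeom
  · exact one_mul 1

theorem mk_Rbar_mul_partProd (ℓ μ : ℕ) :
    (PowerSeries.mk fun n => (Rbar ℓ μ n : R)) * partProd (fun i => ¬ ℓ ∣ i ∧ ¬ μ ∣ i) (-1) =
      partProd (fun i => ¬ ℓ ∣ i ∧ ¬ μ ∣ i) 1 := by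
  have hmul : (PowerSeries.mk fun n => (Rbar ℓ μ n : R)) =
      (PowerSeries.mk fun n => (regularCount ℓ μ n : R)) *
        PowerSeries.mk fun n => (regularDistinctCount ℓ μ n : R) := by
    ext n
    simp [coeff_mul, Rbar]
  have hcount (n : ℕ) : regularCount ℓ μ n =
      (Nat.Partition.restricted n fun i => ¬ ℓ ∣ i ∧ ¬ μ ∣ i).card :=
    Fintype.card_subtype _
  have hdistinct (n : ℕ) : regularDistinctCount ℓ μ n =
      #{π : n.Partition | π.parts.Nodup ∧ ∀ i ∈ π.parts, ¬ ℓ ∣ i ∧ ¬ μ ∣ i} :=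
    Fintype.card_subtype _
  simp only [hmul, hcount, hdistinct]
  rw [mul_right_comm, mk_card_restricted_mul_partProd_neg_one, one_mul,
    mk_card_nodup_restricted_eq_partProd]

end GeneratingFunction

section ModTwo

open PowerSeries

theorem two_dvd_Rbar (ℓ μ : ℕ) {n : ℕ} (hn : n ≠ 0) : 2 ∣ Rbar ℓ μ n := by
  have hneg : (-1 : ZMod 2) = 1 := by decide
  have hone : (PowerSeries.mk fun n => (Rbar ℓ μ n : ZMod 2)) = 1 := by
    have h := mk_Rbar_mul_partProd (ZMod 2) ℓ μ
    rw [hneg] at h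
    exact (isUnit_partProd _ 1).mul_eq_right.mp h
  have hcoeff := congrArg (coeff n) hone
  rwa [coeff_mk, coeff_one, if_neg hn, ZMod.natCast_eq_zero_iff] at hcoeff

end ModTwo

section QuadraticForm

theorem prime_dvd_ncard_of_mapsTo_of_iterate_eq {α : Type*} {p : ℕ} [Fact p.Prime] {s : Set α}
    (hs : s.Finite) {σ : α → α} (hmaps : Set.MapsTo σ s s) (hiter : ∀ a ∈ s, σ^[p] a = a)
    (hfix : ∀ a ∈ s, σ a ≠ a) : p ∣ s.ncard := by
  classical
  have := hs.fintype
  let f : Function.End s := hmaps.restrict σ s s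
  have hf : f ^ p ^ 1 = 1 := by
    rw [pow_one]
    funext a
    exact Subtype.ext ((hmaps.coe_iterate_restrict a p).trans (hiter a a.2))
  have hzero : Fintype.card f.fixedPoints = 0 :=
    Fintype.card_eq_zero_iff.mpr ⟨fun a => hfix a.1 a.1.2 (congrArg Subtype.val a.2)⟩
  have hcard := Equiv.Perm.card_fixedPoints_modEq hf
  rw [hzero, Nat.modEq_zero_iff_dvd, ← Nat.card_eq_fintype_card] at hcard
  exact hcard

lemma dvd_and_dvd_of_dvd_sq_add_sq {p : ℕ} [Fact p.Prime] (hp : p % 4 = 3) {x y : ℤ}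
    (h : (p : ℤ) ∣ x ^ 2 + y ^ 2) : (p : ℤ) ∣ x ∧ (p : ℤ) ∣ y := by
  simp only [← ZMod.intCast_zmod_eq_zero_iff_dvd] at h ⊢
  push_cast at h
  have hy : (y : ZMod p) = 0 := by
    by_contra hy
    exact ZMod.mod_four_ne_three_of_sq_eq_neg_sq' hy (eq_neg_of_add_eq_zero_left h) hp
  refine ⟨?_, hy⟩
  rwa [hy, zero_pow two_ne_zero, add_zero, sq_eq_zero_iff] at h

lemma preimage_natAbs_sq_add_three_mul_eq_image {n : ℕ} (heven : Even n) :
    (fun v : ℤ × ℤ => v.1.natAbs ^ 2 + 3 * v.2.natAbs ^ 2) ⁻¹' {n} =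
      (fun v : ℤ × ℤ => (v.1 + 2 * v.2, v.1)) ''
        {v | 4 * (v.1 ^ 2 + v.1 * v.2 + v.2 ^ 2) = n} := by
  ext ⟨x, y⟩
  have hmem : (x, y) ∈ (fun v : ℤ × ℤ => v.1.natAbs ^ 2 + 3 * v.2.natAbs ^ 2) ⁻¹' {n} ↔
      x ^ 2 + 3 * y ^ 2 = n := by
    simp only [Set.mem_preimage, Set.mem_singleton_iff]
    zify
    simp only [sq_abs]
  rw [hmem]
  constructor
  · intro hxy
    obtain ⟨c, hc⟩ : Even (x - y) := by
      have h : Even (x ^ 2 + 3 * y ^ 2) := hxy ▸ (Int.even_coe_nat n).mpr heven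
      have h3 : ¬ Even (3 : ℤ) := by decide
      simpa [Int.even_add, Int.even_sub, Int.even_mul, Int.even_pow, h3] using h
    obtain rfl : x = y + 2 * c := by omega
    exact ⟨(y, c), by rw [Set.mem_ofPred_eq]; linear_combination hxy, rfl⟩
  · rintro ⟨⟨a, b⟩, hab, hxy⟩
    obtain ⟨rfl, rfl⟩ := Prod.mk.inj hxy
    rw [Set.mem_ofPred_eq] at hab
    linear_combination hab

theorem three_dvd_ncard_sq_add_three_mul_sq {n : ℕ} (hn : n ≠ 0) (heven : Even n) :
    3 ∣ ((fun v : ℤ × ℤ => v.1.natAbs ^ 2 + 3 * v.2.natAbs ^ 2) ⁻¹' {n}).ncard := by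
  have hinj : Function.Injective fun v : ℤ × ℤ => (v.1 + 2 * v.2, v.1) := fun v w hvw => by
    obtain ⟨hadd, hfst⟩ := Prod.mk.inj hvw
    exact Prod.ext hfst (by omega)
  have hfinite :=
    finite_preimage_fst_add_snd finite_preimage_natAbs_sq
      (finite_preimage_mul_natAbs_sq three_ne_zero) n
  rw [preimage_natAbs_sq_add_three_mul_eq_image heven] at hfinite ⊢
  rw [Set.ncard_image_of_injective _ hinj]
  -- The form is the norm of `a - b * ω` in `ℤ[ω]`, with `ω` a primitive cube root of unity, and `σ`
  -- is the multiplication by `ω`.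
  refine prime_dvd_ncard_of_mapsTo_of_iterate_eq (hfinite.of_finite_image hinj.injOn)
    (σ := fun v => (v.2, -v.1 - v.2)) ?_ ?_ ?_
  · intro v hv
    rw [Set.mem_ofPred_eq] at hv ⊢
    linear_combination hv
  · intro v _
    simp only [Function.iterate_succ, Function.iterate_zero, Function.comp_apply, id_eq]
    exact Prod.ext (by ring) (by ring)
  · rintro ⟨a, b⟩ hv hfix
    obtain ⟨hab, hba⟩ := Prod.mk.inj hfix
    obtain ⟨rfl, rfl⟩ : a = 0 ∧ b = 0 := by omega
    exact hn (by simpa [eq_comm] using hv)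

lemma sq_add_three_mul_sq_ne_three_pow_mul (k n x y : ℕ) :
    x ^ 2 + 3 * y ^ 2 ≠ 3 ^ k * (3 * n + 2) := by
  induction k generalizing x y with
  | zero =>
    intro h
    have hmod : x ^ 2 % 3 = 2 := by omega
    rw [Nat.pow_mod] at hmod
    have hlt := Nat.mod_lt x three_pos
    interval_cases x % 3 <;> omega
  | succ k ih =>
    intro h
    have hdvd : 3 ∣ x ^ 2 := (Nat.dvd_add_left (dvd_mul_right 3 _)).mp
      ⟨3 ^ k * (3 * n + 2), by rw [h]; ring⟩
    obtain ⟨c, rfl⟩ := Nat.prime_three.dvd_of_dvd_pow hdvd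
    refine ih y c (Nat.eq_of_mul_eq_mul_left three_pos ?_)
    linear_combination h

end QuadraticForm

section ModThree

open PowerSeries

theorem atkinU_theta_sq {p : ℕ} [hp : Fact p.Prime] (hp4 : p % 4 = 3) :
    atkinU (ZMod p) p (theta (ZMod p) ^ 2) = (theta (ZMod p) ^ 2) ^ p := by
  rw [pow_char_eq_expand, sq, theta_mul_theta, expand_fiberSeries]
  refine atkinU_fiberSeries (e := fun v : ℤ × ℤ => (p * v.1, p * v.2)) ?_ ?_ ?_ hp.out.ne_zero
  · intro v w hvw
    simpa [Prod.ext_iff, hp.out.ne_zero] using hvw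
  · intro v
    simp only [Int.natAbs_mul, Int.natAbs_natCast]
    ring
  · rintro ⟨x, y⟩ hxy
    zify at hxy
    simp only [sq_abs] at hxy
    obtain ⟨⟨a, rfl⟩, ⟨b, rfl⟩⟩ := dvd_and_dvd_of_dvd_sq_add_sq hp4 hxy
    exact ⟨(a, b), rfl⟩

lemma theta_pow_four_add_rescale_theta_pow_four :
    theta (ZMod 3) ^ 4 + rescale (-1) (theta (ZMod 3)) ^ 4 = 2 := by
  have hpow : theta (ZMod 3) ^ 4 =
      fiberSeries (ZMod 3) fun v : ℤ × ℤ => v.1.natAbs ^ 2 + 3 * v.2.natAbs ^ 2 := by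
    rw [← theta_mul_expand_theta (ZMod 3) three_ne_zero, ← pow_char_eq_expand, ← pow_succ']
  ext n
  rw [← map_pow, map_add, coeff_rescale]
  obtain rfl | hn := eq_or_ne n 0
  · simpa [one_add_one_eq_two] using (map_ofNat (constantCoeff (R := ZMod 3)) 2).symm
  have htwo : coeff n (2 : (ZMod 3)⟦X⟧) = 0 := by
    rw [← map_ofNat (C (R := ZMod 3)), coeff_C, if_neg hn]
  rw [htwo]
  obtain heven | hodd := n.even_or_odd
  · rw [hpow, coeff_fiberSeries,
      (ZMod.natCast_eq_zero_iff _ 3).mpr (three_dvd_ncard_sq_add_three_mul_sq hn heven)]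
    simp
  · rw [hodd.neg_one_pow]
    ring

theorem mk_Rbar_two_three_mul_theta :
    (PowerSeries.mk fun n => (Rbar 2 3 n : ZMod 3)) * theta (ZMod 3) =
      rescale (-1) (theta (ZMod 3)) := by
  have hq (i : ℕ) : ¬ 2 ∣ 3 * i ↔ ¬ 2 ∣ i := by omega
  have hG := mk_Rbar_mul_partProd (ZMod 3) 2 3
  have hplus := partProd_and_not_dvd_mul_pow (p := 3) (q := fun i => ¬ 2 ∣ i) hq 1
  have hminus := partProd_and_not_dvd_mul_pow (p := 3) (q := fun i => ¬ 2 ∣ i) hq (-1)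
  have hA := partProd_even_mul_partProd_odd_sq (one_pow 2 : (1 : ZMod 3) ^ 2 = 1)
  have hB := partProd_even_mul_partProd_odd_sq (neg_one_sq : (-1 : ZMod 3) ^ 2 = 1)
  rw [rescale_one, RingHom.id_apply] at hA
  rw [← hB, ← hA]
  simp only [Nat.reduceSub] at hplus hminus
  set G := PowerSeries.mk fun n => (Rbar 2 3 n : ZMod 3)
  set E : (ZMod 3)⟦X⟧ := partProd (2 ∣ ·) (-1)
  set P : (ZMod 3)⟦X⟧ := partProd (¬ 2 ∣ ·) 1
  set M : (ZMod 3)⟦X⟧ := partProd (¬ 2 ∣ ·) (-1)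
  linear_combination E * P ^ 2 * M ^ 2 * hG - G * E * P ^ 2 * hminus + E * M ^ 2 * hplus

theorem atkinU_three_mk_Rbar_two_three :
    atkinU (ZMod 3) 3 (PowerSeries.mk fun n => (Rbar 2 3 n : ZMod 3)) =
      theta (ZMod 3) * rescale (-1) (theta (ZMod 3)) ^ 3 := by
  have hG := mk_Rbar_two_three_mul_theta
  have hfour := theta_pow_four_add_rescale_theta_pow_four
  have hU := atkinU_theta_sq (p := 3) rfl
  have hunit : IsUnit (theta (ZMod 3) * rescale (-1) (theta (ZMod 3))) := by
    rw [isUnit_iff_constantCoeff, map_mul, constantCoeff_theta, ← coeff_zero_eq_constantCoeff_apply,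
      coeff_rescale]
    simp
  have hthree : (3 : (ZMod 3)⟦X⟧) = 0 := by
    rw [← map_ofNat (C (R := ZMod 3)), show (OfNat.ofNat 3 : ZMod 3) = 0 by decide, map_zero]
  set G := PowerSeries.mk fun n => (Rbar 2 3 n : ZMod 3)
  set A := theta (ZMod 3)
  set B := rescale (-1) A
  have hB : B ^ 4 = -(1 + A ^ 4) := by linear_combination hfour + hthree
  have hcubes : G * (A * B) ^ 3 = -(A ^ 2 + 1 * (A ^ 2) ^ 3) := by
    linear_combination B ^ 3 * A ^ 2 * hG + A ^ 2 * hB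
  refine hunit.mul_right_cancel ?_
  calc atkinU (ZMod 3) 3 G * (A * B)
      = atkinU (ZMod 3) 3 (-(A ^ 2 + 1 * (A ^ 2) ^ 3)) := by rw [← hcubes, atkinU_mul_pow_char]
    _ = -((A ^ 2) ^ 3 + A ^ 2) := by
      rw [map_neg, map_add, hU, atkinU_mul_pow_char, atkinU_one three_ne_zero, one_mul]
    _ = A * B ^ 3 * (A * B) := by linear_combination -A ^ 2 * hB

end ModThree

theorem Rbar_two_three_pow_three_general {N : ℕ} (hN : ∀ x y, x ^ 2 + 3 * y ^ 2 ≠ N) :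
    Rbar 2 3 (3 * N) ≡ 0 [MOD 6] := by
  have hN0 : 3 * N ≠ 0 := by
    intro h
    exact hN 0 0 (by omega)
  have hthree : 3 ∣ Rbar 2 3 (3 * N) := by
    have hcoeff := congrArg (PowerSeries.coeff N) atkinU_three_mk_Rbar_two_three
    rw [pow_char_eq_expand, coeff_theta_mul_expand_rescale_theta_eq_zero _ _ hN,
      coeff_atkinU, PowerSeries.coeff_mk] at hcoeff
    exact (ZMod.natCast_eq_zero_iff _ _).mp hcoeff
  rw [Nat.modEq_zero_iff_dvd]
  exact Nat.Coprime.mul_dvd_of_dvd_of_dvd (by norm_num) (two_dvd_Rbar 2 3 hN0) hthree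

theorem Rbar_two_three_pow_three (β n : ℕ) (hβ : 1 ≤ β) :
    Rbar 2 3 (3 ^ β * (3 * n + 2)) ≡ 0 [MOD 6] := by
  obtain ⟨k, rfl⟩ := Nat.exists_eq_add_of_le' hβ
  simpa only [pow_succ', mul_assoc] using
    Rbar_two_three_pow_three_general (sq_add_three_mul_sq_ne_three_pow_mul k n)
end

section
/- For all integers n ≥ 1, the number of (4,3)-regular overpartitions satisfies R̄_{4,3}(2n) ≡ 0 (mod 4). -/
/-!
A partition into parts of admissible sizes with `k` distinct part sizes underlies `2 ^ k`
overpartitions, since for each size one occurrence may be overlined; on generating functions this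
is `(1 + q + q² + ⋯) (1 + q) = 1 + 2 (q + q² + ⋯)`. Modulo `4` only partitions with a single part
size survive, and those of `n` correspond to divisors of `n`, so `Rbar ℓ μ n` is congruent to twice
the number of divisors of `n` divisible by neither `ℓ` nor `μ`.

If `p` is a prime not dividing `μ` and `p ^ k ∣ n`, the admissible divisors for `ℓ = p ^ (k + 1)`
split by their `p`-adic valuation `0, …, k` into `k + 1` classes, which multiplication by powers of
`p` puts in bijection. Their number is thus a multiple of `k + 1`, hence even for odd `k`; here
`p = 2` and `k = 1`.
-/

section

open Finset Nat.Partition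

section GeneratingFunction

open PowerSeries

theorem one_add_tsum_pow_succ_mul_one_add {A : Type*} [Semiring A] [TopologicalSpace A]
    [IsTopologicalSemiring A] [T2Space A] {x : A} (hx : Summable fun j : ℕ ↦ x ^ (j + 1)) :
    (1 + ∑' j : ℕ, x ^ (j + 1)) * (1 + x) = 1 + 2 * ∑' j : ℕ, x ^ (j + 1) := by
  have shift : ∑' j : ℕ, x ^ (j + 1) = x + (∑' j : ℕ, x ^ (j + 1)) * x := by
    have tail : Summable fun j : ℕ ↦ x ^ (j + 1 + 1) := by
      simpa only [← pow_succ] using hx.mul_right x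
    rw [← hx.tsum_mul_right, tsum_eq_zero_add' (f := fun j ↦ x ^ (j + 1)) tail]
    simp only [zero_add, pow_one, ← pow_succ]
  set G := ∑' j : ℕ, x ^ (j + 1)
  calc (1 + G) * (1 + x) = 1 + G + (x + G * x) := by noncomm_ring
    _ = 1 + 2 * G := by rw [← shift, two_mul, add_assoc]

open scoped PowerSeries.WithPiTopology in
theorem genFun_restricted_mul_genFun_distinct (R : Type*) [CommSemiring R] (P : ℕ → Prop)
    [DecidablePred P] :
    genFun (fun i _ ↦ if P i then (1 : R) else 0) *
      genFun (fun i c ↦ if c = 1 ∧ P i then (1 : R) else 0) =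
    genFun (fun i _ ↦ if P i then (2 : R) else 0) := by
  let _ : TopologicalSpace R := ⊥
  have _ : DiscreteTopology R := ⟨rfl⟩
  refine ((hasProd_genFun _).mul (hasProd_genFun _)).unique ?_
  convert! hasProd_genFun (fun i _ ↦ if P i then (2 : R) else 0) using 1
  ext1 i
  by_cases hP : P (i + 1)
  · have hX : Summable fun j : ℕ ↦ ((X : R⟦X⟧) ^ (i + 1)) ^ (j + 1) := by
      simpa [pow_mul] using summable_genFun_term (fun _ _ ↦ (1 : R)) i
    have overlined : ∑' j : ℕ, (if j + 1 = 1 then (1 : R) else 0) •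
        ((X : R⟦X⟧) ^ (i + 1)) ^ (j + 1) = X ^ (i + 1) := by
      rw [tsum_eq_single 0 fun j hj ↦ by simp [hj]]
      simp
    simpa [hP, pow_mul, overlined, ofNat_smul_eq_nsmul, two_nsmul, two_mul, hX.tsum_add hX]
      using one_add_tsum_pow_succ_mul_one_add hX
  · simp [hP]

end GeneratingFunction

theorem regularCount_eq_coeff_genFun (ℓ μ n : ℕ) :
    regularCount ℓ μ n =
      (genFun fun i _ ↦ if ¬ ℓ ∣ i ∧ ¬ μ ∣ i then 1 else 0).coeff n := by
  simp only [regularCount, Fintype.card_subtype, card_filter, coeff_genFun, Finsupp.prod,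
    prod_boole, Multiset.toFinsupp_support, Multiset.mem_toFinset]

theorem regularDistinctCount_eq_coeff_genFun (ℓ μ n : ℕ) :
    regularDistinctCount ℓ μ n =
      (genFun fun i c ↦ if c = 1 ∧ ¬ ℓ ∣ i ∧ ¬ μ ∣ i then 1 else 0).coeff n := by
  simp only [regularDistinctCount, Fintype.card_subtype, card_filter, coeff_genFun, Finsupp.prod,
    prod_boole, Multiset.toFinsupp_support, Multiset.mem_toFinset]
  simp only [Multiset.toFinsupp_apply, Multiset.nodup_iff_count_eq_one, forall₂_and]

theorem Rbar_eq_sum_two_pow (ℓ μ n : ℕ) :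
    Rbar ℓ μ n =
      ∑ p ∈ restricted n fun i ↦ ¬ ℓ ∣ i ∧ ¬ μ ∣ i, 2 ^ #p.parts.toFinset := by
  simp only [Rbar, regularCount_eq_coeff_genFun, regularDistinctCount_eq_coeff_genFun]
  rw [← PowerSeries.coeff_mul, genFun_restricted_mul_genFun_distinct, coeff_genFun, restricted,
    sum_filter]
  refine sum_congr rfl fun p _ ↦ ?_
  simp [Finsupp.prod, prod_ite_zero]

/-- The partition of `n` all of whose parts are equal to a given divisor `d` of `n`. -/
def equalPartsPartition {n d : ℕ} (hd : d ∈ n.divisors) : n.Partition where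
  parts := Multiset.replicate (n / d) d
  parts_pos hi := Multiset.eq_of_mem_replicate hi ▸ Nat.pos_of_mem_divisors hd
  parts_sum := by simp [Nat.div_mul_cancel (Nat.dvd_of_mem_divisors hd)]

theorem toFinset_parts_equalPartsPartition {n d : ℕ} (hd : d ∈ n.divisors) :
    (equalPartsPartition hd).parts.toFinset = {d} := by
  rw [equalPartsPartition, Multiset.toFinset_replicate, if_neg]
  exact (Nat.div_pos (Nat.divisor_le hd) (Nat.pos_of_mem_divisors hd)).ne'

theorem exists_eq_equalPartsPartition {n d : ℕ} {p : n.Partition} (hp : p.parts.toFinset = {d}) :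
    ∃ hd : d ∈ n.divisors, equalPartsPartition hd = p := by
  obtain ⟨k, hk, hparts⟩ : ∃ k ≠ 0, p.parts = Multiset.replicate k d := by
    refine ⟨p.parts.card, ?_⟩
    rwa [← Multiset.nsmul_singleton, ← Multiset.toFinset_eq_singleton_iff]
  have hd : 0 < d := p.parts_pos (by simp [← Multiset.mem_toFinset, hp])
  have hn : k * d = n := by simpa [hparts] using p.parts_sum
  refine ⟨Nat.mem_divisors.mpr ⟨⟨k, hn.symm.trans (mul_comm k d)⟩, ?_⟩, Nat.Partition.ext ?_⟩
  · exact hn ▸ mul_ne_zero hk hd.ne'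
  · simp [equalPartsPartition, hparts, ← hn, hd]

theorem card_restricted_filter_card_toFinset_eq_one (n : ℕ) (P : ℕ → Prop) [DecidablePred P] :
    #{p ∈ restricted n P | #p.parts.toFinset = 1} = #{d ∈ n.divisors | P d} := by
  symm
  refine card_bij (fun d hd ↦ equalPartsPartition (mem_filter.mp hd).1) ?_ ?_ ?_
  · intro d hd
    have hsupp := toFinset_parts_equalPartsPartition (mem_filter.mp hd).1
    simp [restricted, ← Multiset.mem_toFinset, hsupp, (mem_filter.mp hd).2]
  · intro d hd e he h
    simpa only [toFinset_parts_equalPartsPartition, singleton_inj] using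
      congrArg (·.parts.toFinset) h
  · intro p hp
    obtain ⟨hP, hcard⟩ := mem_filter.mp hp
    obtain ⟨d, hsupp⟩ := card_eq_one.mp hcard
    obtain ⟨hd, rfl⟩ := exists_eq_equalPartsPartition hsupp
    refine ⟨d, mem_filter.mpr ⟨hd, (mem_filter.mp hP).2 d ?_⟩, rfl⟩
    simp [← Multiset.mem_toFinset, hsupp]

theorem card_toFinset_parts_ne_zero {n : ℕ} (hn : n ≠ 0) (p : n.Partition) :
    #p.parts.toFinset ≠ 0 := by
  intro h
  have : p.parts = 0 := by simpa using h
  exact hn (by simpa [this] using p.parts_sum.symm)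

theorem sum_restricted_pow_card_toFinset_modEq {n : ℕ} (hn : n ≠ 0) (r : ℕ) (P : ℕ → Prop)
    [DecidablePred P] :
    ∑ p ∈ restricted n P, r ^ #p.parts.toFinset ≡ r * #{d ∈ n.divisors | P d} [MOD r ^ 2] := by
  rw [← sum_filter_add_sum_filter_not _ (fun p ↦ #p.parts.toFinset = 1)]
  have single : ∑ p ∈ restricted n P with #p.parts.toFinset = 1, r ^ #p.parts.toFinset =
      r * #{d ∈ n.divisors | P d} := by
    rw [← card_restricted_filter_card_toFinset_eq_one, mul_comm]
    exact sum_const_nat fun p hp ↦ by rw [(mem_filter.mp hp).2, pow_one]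
  have several : r ^ 2 ∣
      ∑ p ∈ restricted n P with #p.parts.toFinset ≠ 1, r ^ #p.parts.toFinset := by
    refine dvd_sum fun p hp ↦ pow_dvd_pow r ?_
    have := card_toFinset_parts_ne_zero hn p
    have := (mem_filter.mp hp).2
    omega
  rw [single]
  exact (Nat.modEq_zero_iff_dvd.mpr several).add_left (r * #{d ∈ n.divisors | P d})

theorem Rbar_modEq_two_mul_card_divisors (ℓ μ : ℕ) {n : ℕ} (hn : n ≠ 0) :
    Rbar ℓ μ n ≡ 2 * #{d ∈ n.divisors | ¬ ℓ ∣ d ∧ ¬ μ ∣ d} [MOD 4] := by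
  rw [Rbar_eq_sum_two_pow]
  exact sum_restricted_pow_card_toFinset_modEq hn 2 _

section Divisors

variable {p μ n k : ℕ}

theorem card_divisors_pow_dvd_not_pow_succ_dvd (hp : p.Prime) (hμ : p.Coprime μ)
    (hk : p ^ k ∣ n) :
    #{d ∈ n.divisors | p ^ k ∣ d ∧ ¬ p ^ (k + 1) ∣ d ∧ ¬ μ ∣ d} =
      #{d ∈ n.divisors | ¬ p ∣ d ∧ ¬ μ ∣ d} := by
  symm
  have hp0 : p ^ k ≠ 0 := pow_ne_zero k hp.ne_zero
  have dvd_iff (e : ℕ) : p ^ (k + 1) ∣ p ^ k * e ↔ p ∣ e := by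
    rw [pow_succ, Nat.mul_dvd_mul_iff_left (Nat.pos_of_ne_zero hp0)]
  have not_dvd_iff (e : ℕ) : ¬ μ ∣ p ^ k * e ↔ ¬ μ ∣ e :=
    not_congr (hμ.symm.pow_right k).dvd_mul_left
  refine card_nbij (p ^ k * ·) ?_ (mul_right_injective₀ hp0).injOn ?_
  · intro e he
    simp only [coe_filter, Set.mem_ofPred_eq, Nat.mem_divisors, dvd_iff, not_dvd_iff] at he ⊢
    obtain ⟨⟨hen, hn⟩, hpe, hμe⟩ := he
    have hcop : (p ^ k).Coprime e := (hp.coprime_iff_not_dvd.mpr hpe).pow_left k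
    exact ⟨⟨hcop.mul_dvd_of_dvd_of_dvd hk hen, hn⟩, dvd_mul_right _ _, hpe, hμe⟩
  · intro d hd
    simp only [coe_filter, Set.mem_ofPred_eq, Nat.mem_divisors] at hd
    obtain ⟨⟨hdn, hn⟩, ⟨e, rfl⟩, hpd, hμd⟩ := hd
    refine ⟨e, ?_, rfl⟩
    rw [dvd_iff] at hpd
    rw [not_dvd_iff] at hμd
    simpa using ⟨⟨(dvd_mul_left _ _).trans hdn, hn⟩, hpd, hμd⟩

theorem card_divisors_not_pow_succ_dvd (hp : p.Prime) (hμ : p.Coprime μ) (hk : p ^ k ∣ n) :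
    #{d ∈ n.divisors | ¬ p ^ (k + 1) ∣ d ∧ ¬ μ ∣ d} =
      (k + 1) * #{d ∈ n.divisors | ¬ p ∣ d ∧ ¬ μ ∣ d} := by
  induction k with
  | zero => simp
  | succ k ih =>
    have not_dvd_succ {d : ℕ} (h : ¬ p ^ (k + 1) ∣ d) : ¬ p ^ (k + 2) ∣ d :=
      fun h' ↦ h ((pow_dvd_pow p (k + 1).le_succ).trans h')
    rw [← card_filter_add_card_filter_not (p ^ (k + 1) ∣ ·), filter_filter, filter_filter]
    calc _ = #{d ∈ n.divisors | p ^ (k + 1) ∣ d ∧ ¬ p ^ (k + 2) ∣ d ∧ ¬ μ ∣ d} +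
          #{d ∈ n.divisors | ¬ p ^ (k + 1) ∣ d ∧ ¬ μ ∣ d} := by
          congr 3 <;> ext d <;> grind
      _ = (k + 1 + 1) * #{d ∈ n.divisors | ¬ p ∣ d ∧ ¬ μ ∣ d} := by
          rw [card_divisors_pow_dvd_not_pow_succ_dvd hp hμ hk,
            ih ((pow_dvd_pow p k.le_succ).trans hk)]
          ring

end Divisors

theorem Rbar_four_three_even_mod_four_general {p k μ n : ℕ} (hp : p.Prime) (hμ : p.Coprime μ)
    (hk : Odd k) (hn : n ≠ 0) (hpn : p ^ k ∣ n) :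
    Rbar (p ^ (k + 1)) μ n ≡ 0 [MOD 4] := by
  have even_card : 2 ∣ #{d ∈ n.divisors | ¬ p ^ (k + 1) ∣ d ∧ ¬ μ ∣ d} := by
    rw [card_divisors_not_pow_succ_dvd hp hμ hpn]
    exact dvd_mul_of_dvd_left hk.add_one.two_dvd _
  exact (Rbar_modEq_two_mul_card_divisors _ _ hn).trans
    (Nat.modEq_zero_iff_dvd.mpr (mul_dvd_mul_left 2 even_card))

end

theorem Rbar_four_three_even_mod_four (n : ℕ) (hn : 1 ≤ n) :
    Rbar 4 3 (2 * n) ≡ 0 [MOD 4] :=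
  Rbar_four_three_even_mod_four_general (p := 2) (k := 1) Nat.prime_two (by norm_num) odd_one
    (by omega) (by simp)
end

section
/- For all integers n ≥ 1 such that n is not the square of an odd integer, the number of (4,3)-regular overpartitions satisfies R̄_{4,3}(2n) ≡ 0 (mod 8). -/
/-!
By Gauss's identity, overpartitions into multiples of `k` have generating function `1 / φ(-q ^ k)`,
where `φ(-q) = 1 + 2 ∑ (-1) ^ m * q ^ (m ^ 2)` over `m ≥ 1`. Inclusion-exclusion on the parts
divisible by `4`, by `3` and by `12` therefore gives
`∑ R̄₄,₃(n) * q ^ n = φ(-q ^ 4) * φ(-q ^ 3) / (φ(-q) * φ(-q ^ 12))`.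
Each factor is `1 + 2 * x`, so modulo `8` only terms linear and quadratic in the `x` survive. Write
`o k` and `e k` for the sums of `q ^ (k * m ^ 2)` over odd and over even `m ≥ 1`. At even exponents
what is left is `4 * (o 4 + o 12 + o 1 * o 3 + o 1 ^ 2)`, and only its parity matters. Exchanging
the two squares reduces `o 1 ^ 2` to its diagonal `o 2`. Multiplication by a unit of the Eisenstein
integers followed by signs is an involution of the solutions of `u ^ 2 + 3 * v ^ 2 = N` in odd
positive integers, and it reduces `o 1 * o 3` to the solutions with `u = v` or `u = 3 * v`, that is
to `o 4 + o 12`. Hence `R̄₄,₃(2 * n)` is `4` times the coefficient of `q ^ (2 * n)` in `o 2`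
modulo `8`.
-/

open PowerSeries Finset Function
open scoped PowerSeries.WithPiTopology

section WeightSeries

variable {ι κ : Type*}

/-- The generating function `∑ᵢ X ^ f i`, where `f i` is the weight of `i`. Its coefficients are
cardinalities `Set.ncard`, so it is meaningful only for weights with finite fibres. -/
noncomputable def weightSeries (f : ι → ℕ) : ℤ⟦X⟧ :=
  PowerSeries.mk fun N ↦ ((f ⁻¹' {N}).ncard : ℤ)

lemma coeff_weightSeries_eq_zero {f : ι → ℕ} {N : ℕ} (hf : ∀ i, f i ≠ N) :
    coeff N (weightSeries f) = 0 := by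
  simp [weightSeries, Set.preimage_singleton_eq_empty.mpr (by simpa using hf)]

lemma hasSum_weightSeries {f : ι → ℕ} (hf : ∀ N, (f ⁻¹' {N}).Finite) :
    HasSum (fun i ↦ (X : ℤ⟦X⟧) ^ f i) (weightSeries f) := by
  rw [WithPiTopology.hasSum_iff_hasSum_coeff]
  intro N
  have hsum := hasSum_sum_of_ne_finset_zero (L := .unconditional ι)
    (f := fun i ↦ coeff N ((X : ℤ⟦X⟧) ^ f i)) (s := (hf N).toFinset) fun i hi ↦ by
      rw [Set.Finite.mem_toFinset, Set.mem_preimage, Set.mem_singleton_iff] at hi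
      rw [coeff_X_pow, if_neg (Ne.symm hi)]
  convert! hsum using 1
  rw [weightSeries, coeff_mk, Set.ncard_eq_toFinset_card _ (hf N), card_eq_sum_ones, Nat.cast_sum]
  refine sum_congr rfl fun i hi ↦ ?_
  rw [Set.Finite.mem_toFinset, Set.mem_preimage, Set.mem_singleton_iff] at hi
  rw [coeff_X_pow, if_pos hi.symm, Nat.cast_one]

lemma finite_preimage_add {f : ι → ℕ} {g : κ → ℕ} (hf : ∀ N, (f ⁻¹' {N}).Finite)
    (hg : ∀ N, (g ⁻¹' {N}).Finite) (N : ℕ) :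
    ((fun p : ι × κ ↦ f p.1 + g p.2) ⁻¹' {N}).Finite := by
  refine (((Set.finite_Iic N).preimage' fun a _ ↦ hf a).prod
    ((Set.finite_Iic N).preimage' fun b _ ↦ hg b)).subset fun p hp ↦ ?_
  simp only [Set.mem_preimage, Set.mem_singleton_iff, Set.mem_prod, Set.mem_Iic] at hp ⊢
  omega

lemma weightSeries_mul {f : ι → ℕ} {g : κ → ℕ} (hf : ∀ N, (f ⁻¹' {N}).Finite)
    (hg : ∀ N, (g ⁻¹' {N}).Finite) :
    weightSeries f * weightSeries g = weightSeries fun p : ι × κ ↦ f p.1 + g p.2 := by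
  refine (hasSum_weightSeries hf).mul_eq (hasSum_weightSeries hg) ?_
  simpa only [pow_add] using hasSum_weightSeries (finite_preimage_add hf hg)

lemma weightSeries_sumElim {f : ι → ℕ} {g : κ → ℕ} (hf : ∀ N, (f ⁻¹' {N}).Finite)
    (hg : ∀ N, (g ⁻¹' {N}).Finite) :
    weightSeries (Sum.elim f g) = weightSeries f + weightSeries g := by
  ext N
  have hdisj : Disjoint (Sum.inl '' (f ⁻¹' {N})) (Sum.inr '' (g ⁻¹' {N})) :=
    Set.disjoint_left.mpr (by rintro _ ⟨i, -, rfl⟩ ⟨j, -, h⟩; cases h)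
  have hfib : Sum.elim f g ⁻¹' {N} = Sum.inl '' (f ⁻¹' {N}) ∪ Sum.inr '' (g ⁻¹' {N}) := by
    ext (i | j) <;> simp
  rw [map_add, weightSeries, weightSeries, weightSeries, coeff_mk, coeff_mk, coeff_mk, hfib,
    Set.ncard_union_eq hdisj ((hf N).image _) ((hg N).image _),
    Set.ncard_image_of_injective _ Sum.inl_injective,
    Set.ncard_image_of_injective _ Sum.inr_injective, Nat.cast_add]

lemma weightSeries_comp_equiv (e : κ ≃ ι) (f : ι → ℕ) :
    weightSeries (f ∘ e) = weightSeries f := by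
  ext N
  rw [weightSeries, weightSeries, coeff_mk, coeff_mk, Set.preimage_comp,
    Set.ncard_preimage_of_injective_subset_range e.injective (by simp)]

lemma ncard_modEq_ncard_inter_fixedPoints {σ : ι → ι} (hσ : Involutive σ) {s : Set ι}
    (hs : s.Finite) (hmaps : Set.MapsTo σ s s) :
    s.ncard ≡ (s ∩ fixedPoints σ).ncard [MOD 2] := by
  classical
  lift s to Finset ι using hs
  have hmoved : ((#{i ∈ s | σ i ≠ i} : ℕ) : ZMod 2) = 0 := by
    rw [card_eq_sum_ones, Nat.cast_sum]
    refine sum_involution (fun i _ ↦ σ i) (fun _ _ ↦ by decide) (fun i hi _ ↦ (mem_filter.mp hi).2)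
      (fun i hi ↦ ?_) fun i _ ↦ hσ i
    rw [mem_filter] at hi ⊢
    exact ⟨hmaps hi.1, fun h ↦ hi.2 (hσ.injective h)⟩
  have hfixed : (s : Set ι) ∩ fixedPoints σ = ({i ∈ s | σ i = i} : Finset ι) := by
    ext i
    simp [IsFixedPt]
  rw [hfixed, Set.ncard_coe_finset, Set.ncard_coe_finset,
    ← card_filter_add_card_filter_not (s := s) (fun i ↦ σ i = i)]
  exact (Nat.modEq_zero_iff_dvd.mpr ((ZMod.natCast_eq_zero_iff _ 2).mp hmoved)).add_left _

lemma coeff_weightSeries_modEq_of_involutive {f : ι → ℕ} (hf : ∀ N, (f ⁻¹' {N}).Finite)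
    {σ : ι → ι} (hσ : Involutive σ) (hfσ : ∀ i, f (σ i) = f i) {a : κ → ι} (ha : Injective a)
    (hrange : Set.range a = fixedPoints σ) (N : ℕ) :
    coeff N (weightSeries f) ≡ coeff N (weightSeries (f ∘ a)) [ZMOD 2] := by
  have hmaps : Set.MapsTo σ (f ⁻¹' {N}) (f ⁻¹' {N}) := fun i hi ↦ (hfσ i).trans hi
  have hfixed : (f ⁻¹' {N} ∩ fixedPoints σ).ncard = ((f ∘ a) ⁻¹' {N}).ncard := by
    rw [← hrange, ← Set.image_preimage_eq_inter_range, Set.ncard_image_of_injective _ ha,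
      Set.preimage_comp]
  rw [weightSeries, weightSeries, coeff_mk, coeff_mk, ← hfixed]
  exact_mod_cast ncard_modEq_ncard_inter_fixedPoints hσ (hf N) hmaps

end WeightSeries

section Shanks

variable {R : Type*} [CommRing R]

/-- The finite product `∏ (1 + q ^ j) / (1 - q ^ j)` over `1 ≤ j ≤ n`, with `u j` standing for the
inverse of `1 - q ^ (j + 1)`. -/
def shanksProd (q : R) (u : ℕ → R) (n : ℕ) : R :=
  ∏ j ∈ range n, (1 + q ^ (j + 1)) * u j

/-- Shanks' auxiliary sum, which interpolates in `x` between the partial products and the partial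
sums of Gauss's identity. -/
def shanksSum (q : R) (u : ℕ → R) (n : ℕ) (x : R) : R :=
  1 + 2 * ∑ s ∈ range n, (-1) ^ (s + 1) * shanksProd q u s * u s * x ^ (s + 1)

lemma shanksProd_succ (q : R) (u : ℕ → R) (n : ℕ) :
    shanksProd q u (n + 1) = shanksProd q u n * ((1 + q ^ (n + 1)) * u n) :=
  prod_range_succ _ n

lemma shanksSum_succ (q : R) (u : ℕ → R) (n : ℕ) (x : R) :
    shanksSum q u (n + 1) x = shanksSum q u n x +
      2 * ((-1) ^ (n + 1) * shanksProd q u n * u n * x ^ (n + 1)) := by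
  rw [shanksSum, sum_range_succ, shanksSum, mul_add, add_assoc]

variable {q : R} {u : ℕ → R}

lemma dvd_shanksSum_sub_one (n : ℕ) (x : R) : x ∣ shanksSum q u n x - 1 := by
  rw [shanksSum, add_sub_cancel_left]
  exact (dvd_sum fun s _ ↦ (dvd_pow_self x s.succ_ne_zero).mul_left _).mul_left 2

lemma one_sub_mul_shanksSum (hu : ∀ j, u j * (1 - q ^ (j + 1)) = 1) (n : ℕ) (x : R) :
    (1 - x) * shanksSum q u n (q * x) =
      (1 + x) * shanksSum q u n x - 2 * (-1) ^ n * x ^ (n + 1) * shanksProd q u n := by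
  induction n with
  | zero => simp only [shanksSum, shanksProd, range_zero, sum_empty, prod_empty]; ring
  | succ n ih =>
    rw [shanksSum_succ, shanksSum_succ, shanksProd_succ, mul_pow]
    linear_combination ih + 2 * (-1) ^ n * shanksProd q u n * x ^ (n + 1) * hu n

lemma shanksProd_mul_theta (hu : ∀ j, u j * (1 - q ^ (j + 1)) = 1) (n : ℕ) :
    shanksProd q u n * (1 + 2 * ∑ j ∈ range n, (-1) ^ (j + 1) * q ^ ((j + 1) ^ 2)) =
      shanksSum q u n (q ^ (n + 1)) := by
  induction n with
  | zero => simp [shanksProd, shanksSum]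
  | succ n ih =>
    have hstep := one_sub_mul_shanksSum hu n (q ^ (n + 1))
    rw [← pow_succ'] at hstep
    rw [shanksSum_succ, shanksProd_succ, sum_range_succ]
    linear_combination (1 + q ^ (n + 1)) * u n * ih - u n * hstep +
      shanksSum q u n (q ^ (n + 1 + 1)) * hu n

end Shanks

section Overpartitions

/-- The generating function of overpartitions all of whose parts, overlined or not, satisfy `p`,
as the product of the generating functions of the non-overlined and of the overlined parts. -/
noncomputable def overpartitionSeries (p : ℕ → Prop) [DecidablePred p] : ℤ⟦X⟧ :=
  (PowerSeries.mk fun n ↦ (#(Nat.Partition.restricted n p) : ℤ)) *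
    PowerSeries.mk fun n ↦ (#{π ∈ Nat.Partition.distincts n | ∀ i ∈ π.parts, p i} : ℤ)

/-- The generating function `(1 + X ^ i) / (1 - X ^ i)` of overpartitions all of whose parts
equal `i`. -/
noncomputable def overpartitionFactor (i : ℕ) : ℤ⟦X⟧ :=
  (1 + X ^ i) * ∑' j : ℕ, X ^ (i * j)

lemma mk_card_distincts_eq_genFun (R : Type*) [CommSemiring R] (p : ℕ → Prop) [DecidablePred p] :
    (PowerSeries.mk fun n ↦ (#{π ∈ Nat.Partition.distincts n | ∀ i ∈ π.parts, p i} : R)) =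
      Nat.Partition.genFun fun i c ↦ if p i ∧ c ≤ 1 then (1 : R) else 0 := by
  ext n
  rw [coeff_mk, Nat.Partition.coeff_genFun, Nat.Partition.distincts, filter_filter, ← sum_boole]
  refine sum_congr rfl fun π _ ↦ ?_
  rw [Finsupp.prod, prod_boole]
  refine if_congr ?_ rfl rfl
  rw [Multiset.toFinsupp_support, Multiset.nodup_iff_count_le_one]
  simp only [Multiset.mem_toFinset, Multiset.toFinsupp_apply]
  grind [Multiset.count_eq_zero]

lemma hasProd_mk_card_distincts (R : Type*) [CommSemiring R] [TopologicalSpace R] [T2Space R]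
    (p : ℕ → Prop) [DecidablePred p] :
    HasProd (fun i ↦ if p (i + 1) then 1 + (X : R⟦X⟧) ^ (i + 1) else 1)
      (PowerSeries.mk fun n ↦ (#{π ∈ Nat.Partition.distincts n | ∀ i ∈ π.parts, p i} : R)) := by
  rw [mk_card_distincts_eq_genFun]
  convert! Nat.Partition.hasProd_genFun fun i c ↦ if p i ∧ c ≤ 1 then (1 : R) else 0 using 1
  ext1 i
  rw [tsum_eq_single 0 fun j hj ↦ by simp [hj]]
  split_ifs <;> simp_all

lemma hasProd_overpartitionSeries (p : ℕ → Prop) [DecidablePred p] :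
    HasProd (fun i ↦ if p (i + 1) then overpartitionFactor (i + 1) else 1)
      (overpartitionSeries p) := by
  convert! (Nat.Partition.hasProd_powerSeriesMk_card_restricted ℤ p).mul
    (hasProd_mk_card_distincts ℤ p) using 1
  ext1 i
  split_ifs <;> simp [overpartitionFactor, mul_comm]

lemma overpartitionSeries_congr {p r : ℕ → Prop} [DecidablePred p] [DecidablePred r]
    (h : ∀ i, p i ↔ r i) : overpartitionSeries p = overpartitionSeries r := by
  simp only [overpartitionSeries, Nat.Partition.restricted, h]

lemma mk_Rbar_eq_overpartitionSeries (ℓ μ : ℕ) :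
    (PowerSeries.mk fun n ↦ (Rbar ℓ μ n : ℤ)) =
      overpartitionSeries fun i ↦ ¬ ℓ ∣ i ∧ ¬ μ ∣ i := by
  ext n
  rw [overpartitionSeries, coeff_mul, coeff_mk, Rbar, Nat.cast_sum]
  refine sum_congr rfl fun ab _ ↦ ?_
  rw [coeff_mk, coeff_mk, Nat.cast_mul, regularCount, regularDistinctCount, Fintype.card_subtype,
    Fintype.card_subtype, Nat.Partition.restricted, Nat.Partition.distincts, filter_filter]

lemma overpartitionSeries_inclusion_exclusion (p r : ℕ → Prop) [DecidablePred p]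
    [DecidablePred r] :
    overpartitionSeries (fun i ↦ ¬ p i ∧ ¬ r i) * (overpartitionSeries p * overpartitionSeries r) =
      overpartitionSeries (fun _ ↦ True) * overpartitionSeries fun i ↦ p i ∧ r i := by
  refine HasProd.unique ((hasProd_overpartitionSeries _).mul
    ((hasProd_overpartitionSeries p).mul (hasProd_overpartitionSeries r))) ?_
  convert! (hasProd_overpartitionSeries fun _ ↦ True).mul
    (hasProd_overpartitionSeries fun i ↦ p i ∧ r i) using 1
  ext1 i
  by_cases hp : p (i + 1) <;> by_cases hr : r (i + 1) <;> simp [hp, hr]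

lemma hasProd_overpartitionSeries_dvd {k : ℕ} (hk : 0 < k) :
    HasProd (fun j ↦ overpartitionFactor (k * (j + 1))) (overpartitionSeries (k ∣ ·)) := by
  have hsub (j : ℕ) : k * (j + 1) - 1 + 1 = k * (j + 1) :=
    Nat.sub_add_cancel (Nat.mul_pos hk j.succ_pos)
  have hinj : Injective fun j ↦ k * (j + 1) - 1 := fun i j hij ↦ by
    have h : k * (i + 1) = k * (j + 1) := by
      rw [← hsub i, ← hsub j]
      exact congrArg (· + 1) hij
    simpa [hk.ne'] using h
  convert! (hinj.hasProd_iff fun i hi ↦ if_neg ?_).mpr (hasProd_overpartitionSeries (k ∣ ·))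
    using 1
  · ext1 j
    simp only [comp_apply, hsub, dvd_mul_right, if_true]
  · rintro ⟨c, hc⟩
    obtain ⟨j, rfl⟩ : ∃ j, c = j + 1 := Nat.exists_eq_succ_of_ne_zero (by rintro rfl; simp at hc)
    exact hi ⟨j, by simp only [← hc, Nat.add_sub_cancel]⟩

end Overpartitions

section Theta

/-- The series `∑ X ^ (k * m ^ 2)` over odd `m ≥ 1`. -/
noncomputable def oddSquareSeries (k : ℕ) : ℤ⟦X⟧ :=
  weightSeries fun j : ℕ ↦ k * (2 * j + 1) ^ 2

/-- The series `∑ X ^ (k * m ^ 2)` over even `m ≥ 2`. -/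
noncomputable def evenSquareSeries (k : ℕ) : ℤ⟦X⟧ :=
  weightSeries fun j : ℕ ↦ k * (2 * j + 2) ^ 2

/-- The theta series `∑ (-1) ^ m * X ^ (k * m ^ 2)` over all integers `m`, which is Ramanujan's
`φ(-X ^ k)`. -/
noncomputable def thetaSeries (k : ℕ) : ℤ⟦X⟧ :=
  1 + 2 * (evenSquareSeries k - oddSquareSeries k)

variable {k : ℕ}

lemma finite_preimage_mul_sq (hk : 0 < k) {f : ℕ → ℕ} (hf : ∀ j, j ≤ f j) (N : ℕ) :
    ((fun j ↦ k * f j ^ 2) ⁻¹' {N}).Finite := by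
  refine (Set.finite_Iic N).subset fun j hj ↦ ?_
  calc j ≤ f j := hf j
    _ ≤ f j ^ 2 := Nat.le_self_pow two_ne_zero _
    _ ≤ k * f j ^ 2 := Nat.le_mul_of_pos_left _ hk
    _ = N := hj

lemma finite_preimage_mul_odd_sq (hk : 0 < k) (N : ℕ) :
    ((fun j ↦ k * (2 * j + 1) ^ 2) ⁻¹' {N}).Finite :=
  finite_preimage_mul_sq hk (fun j ↦ by omega) N

lemma finite_preimage_mul_even_sq (hk : 0 < k) (N : ℕ) :
    ((fun j ↦ k * (2 * j + 2) ^ 2) ⁻¹' {N}).Finite :=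
  finite_preimage_mul_sq hk (fun j ↦ by omega) N

lemma evenSquareSeries_eq_add (hk : 0 < k) :
    evenSquareSeries k = evenSquareSeries (4 * k) + oddSquareSeries (4 * k) := by
  have h4k : 0 < 4 * k := Nat.mul_pos four_pos hk
  rw [add_comm, evenSquareSeries, ← weightSeries_comp_equiv Equiv.natSumNatEquivNat,
    oddSquareSeries, evenSquareSeries, ← weightSeries_sumElim (finite_preimage_mul_odd_sq h4k)
      (finite_preimage_mul_even_sq h4k)]
  congr 1
  ext (j | j) <;> simp only [comp_apply, Equiv.natSumNatEquivNat_apply, Sum.elim_inl,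
    Sum.elim_inr] <;> ring

lemma thetaSeries_four_mul (hk : 0 < k) :
    thetaSeries (4 * k) = 1 + 2 * (evenSquareSeries k - 2 * oddSquareSeries (4 * k)) := by
  rw [thetaSeries, evenSquareSeries_eq_add hk]
  ring

lemma tendsto_thetaSeries (hk : 0 < k) :
    Filter.Tendsto
      (fun n ↦ 1 + 2 * ∑ j ∈ range n, (-1) ^ (j + 1) * ((X : ℤ⟦X⟧) ^ k) ^ ((j + 1) ^ 2))
      Filter.atTop (nhds (thetaSeries k)) := by
  have hodd := (hasSum_weightSeries (finite_preimage_mul_odd_sq hk)).neg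
  have heven := hasSum_weightSeries (finite_preimage_mul_even_sq hk)
  have hsum : HasSum (fun j ↦ (-1) ^ (j + 1) * ((X : ℤ⟦X⟧) ^ k) ^ ((j + 1) ^ 2))
      (-oddSquareSeries k + evenSquareSeries k) := by
    refine HasSum.even_add_odd ?_ ?_
    · convert! hodd using 2 with j
      rw [← pow_mul, Odd.neg_one_pow ⟨j, rfl⟩, neg_one_mul]
    · convert! heven using 2 with j
      rw [← pow_mul, Even.neg_one_pow ⟨j + 1, by ring⟩, one_mul]
  rw [thetaSeries, sub_eq_neg_add]
  exact (hsum.tendsto_sum_nat.const_mul 2).const_add 1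

/-- Gauss's identity `φ(-q) = ∏ (1 - q ^ j) / (1 + q ^ j)`. -/
theorem overpartitionSeries_dvd_mul_thetaSeries (hk : 0 < k) :
    overpartitionSeries (k ∣ ·) * thetaSeries k = 1 := by
  let u (j : ℕ) : ℤ⟦X⟧ := ∑' m : ℕ, X ^ (k * (j + 1) * m)
  have hu (j : ℕ) : u j * (1 - (X ^ k) ^ (j + 1)) = 1 := by
    simp only [u, pow_mul]
    exact WithPiTopology.tsum_pow_mul_one_sub_of_constantCoeff_eq_zero (by simp [hk.ne'])
  have hprod : Filter.Tendsto (shanksProd (X ^ k) u) Filter.atTop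
      (nhds (overpartitionSeries (k ∣ ·))) := by
    convert! (hasProd_overpartitionSeries_dvd hk).tendsto_prod_nat using 2 with n
    simp only [shanksProd, overpartitionFactor, u, pow_mul]
  have hlim := (hprod.mul (tendsto_thetaSeries hk)).congr (shanksProd_mul_theta hu)
  refine tendsto_nhds_unique hlim ?_
  rw [WithPiTopology.tendsto_iff_coeff_tendsto]
  refine fun N ↦ tendsto_const_nhds.congr' ?_
  filter_upwards [Filter.eventually_ge_atTop N] with n hn
  have hdvd : X ^ (n + 1) ∣ shanksSum (X ^ k) u n ((X ^ k) ^ (n + 1)) - 1 := by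
    refine (Dvd.dvd.trans ?_ (dvd_shanksSum_sub_one n _))
    rw [← pow_mul]
    exact pow_dvd_pow X (Nat.le_mul_of_pos_left _ hk)
  have hcoeff := X_pow_dvd_iff.mp hdvd N (Nat.lt_succ_of_le hn)
  rw [map_sub, sub_eq_zero] at hcoeff
  exact hcoeff.symm

theorem mk_Rbar_mul_thetaSeries {ℓ μ : ℕ} (hℓ : 0 < ℓ) (hμ : 0 < μ) :
    (PowerSeries.mk fun n ↦ (Rbar ℓ μ n : ℤ)) * (thetaSeries 1 * thetaSeries (ℓ.lcm μ)) =
      thetaSeries ℓ * thetaSeries μ := by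
  have hincl := overpartitionSeries_inclusion_exclusion (ℓ ∣ ·) (μ ∣ ·)
  have hone := overpartitionSeries_dvd_mul_thetaSeries one_pos
  have hlcm := overpartitionSeries_dvd_mul_thetaSeries (Nat.lcm_pos hℓ hμ)
  have hℓ' := overpartitionSeries_dvd_mul_thetaSeries hℓ
  have hμ' := overpartitionSeries_dvd_mul_thetaSeries hμ
  rw [← mk_Rbar_eq_overpartitionSeries] at hincl
  rw [overpartitionSeries_congr fun i ↦ iff_true_intro (one_dvd i)] at hone
  rw [overpartitionSeries_congr fun i ↦ Nat.lcm_dvd_iff] at hlcm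
  have hinv : overpartitionSeries (ℓ ∣ ·) * overpartitionSeries (μ ∣ ·) *
      (thetaSeries ℓ * thetaSeries μ) = 1 := by rw [mul_mul_mul_comm, hℓ', hμ', one_mul]
  have hinv' : overpartitionSeries (fun _ ↦ True) * overpartitionSeries (fun i ↦ ℓ ∣ i ∧ μ ∣ i) *
      (thetaSeries 1 * thetaSeries (ℓ.lcm μ)) = 1 := by
    rw [mul_mul_mul_comm, hone, hlcm, one_mul]
  rw [← hincl, mul_right_comm] at hinv'
  exact left_inv_eq_right_inv hinv' hinv

end Theta

section ModEight

variable {R : Type*} [CommRing R]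

-- Modulo `8`, the inverse of `1 + 2 * x` is `1 - 2 * x + 4 * x ^ 2`.
lemma eight_dvd_of_mul_eq_mul {r a b c d : R}
    (h : r * ((1 + 2 * a) * (1 + 2 * d)) = (1 + 2 * b) * (1 + 2 * c)) :
    8 ∣ r - (1 + 2 * (b + c - a - d) +
      4 * (b * c - (b + c) * (a + d) + a * d + a ^ 2 + d ^ 2)) := by
  refine ⟨(b + c) * (a * d + a ^ 2 + d ^ 2) - b * c * (a + d) +
    2 * (b * c) * (a * d + a ^ 2 + d ^ 2) +
    (2 * a ^ 2 * d ^ 2 - a * d ^ 2 - a ^ 2 * d) * ((1 + 2 * b) * (1 + 2 * c)) -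
    r * (a ^ 3 + d ^ 3 + 8 * a ^ 3 * d ^ 3), ?_⟩
  linear_combination (1 - 2 * a + 4 * a ^ 2) * (1 - 2 * d + 4 * d ^ 2) * h

lemma eight_dvd_mk_Rbar_four_three_sub :
    8 ∣ (PowerSeries.mk fun n ↦ (Rbar 4 3 n : ℤ)) -
      (1 + 2 * (oddSquareSeries 1 - oddSquareSeries 3) +
        4 * (oddSquareSeries 4 + oddSquareSeries 12 + oddSquareSeries 1 * oddSquareSeries 3 +
          oddSquareSeries 1 ^ 2 + evenSquareSeries 1 * oddSquareSeries 1 +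
          evenSquareSeries 3 * oddSquareSeries 3)) := by
  have htheta := mk_Rbar_mul_thetaSeries four_pos three_pos
  -- The even squares split off here cancel against those of `thetaSeries 1` and `thetaSeries 3` in
  -- the linear terms.
  have hfour : thetaSeries 4 = 1 + 2 * (evenSquareSeries 1 - 2 * oddSquareSeries 4) := by
    simpa only [mul_one] using thetaSeries_four_mul (k := 1) one_pos
  have htwelve : thetaSeries (4 * 3) = 1 + 2 * (evenSquareSeries 3 - 2 * oddSquareSeries 12) :=
    thetaSeries_four_mul three_pos
  rw [(by decide : Nat.lcm 4 3 = 4 * 3), hfour, htwelve, thetaSeries, thetaSeries,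
    mul_comm (1 + _) (1 + 2 * (_ - oddSquareSeries 3))] at htheta
  obtain ⟨H, hH⟩ := eight_dvd_of_mul_eq_mul htheta
  generalize oddSquareSeries 1 = o₁, oddSquareSeries 3 = o₃, evenSquareSeries 1 = e₁,
    evenSquareSeries 3 = e₃, oddSquareSeries 4 = o₄, oddSquareSeries 12 = o₁₂ at hH ⊢
  refine ⟨H - o₄ + o₃ * o₄ - e₃ * o₁₂ - o₁ * o₃ - o₃ * o₁₂ - e₁ * o₁ + e₁ * o₄ - o₁ * o₄ -
    2 * o₄ * o₁₂ + o₁ * o₁₂ + 2 * o₁₂ ^ 2, ?_⟩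
  linear_combination hH

end ModEight

section Parity

lemma coeff_weightSeries_sq_modEq {ι : Type*} {f : ι → ℕ} (hf : ∀ N, (f ⁻¹' {N}).Finite) (N : ℕ) :
    coeff N (weightSeries f ^ 2) ≡ coeff N (weightSeries fun i ↦ 2 * f i) [ZMOD 2] := by
  rw [sq, weightSeries_mul hf hf]
  have hrange : Set.range (fun i : ι ↦ (i, i)) = fixedPoints Prod.swap := by
    ext ⟨i, j⟩
    simp [IsFixedPt, eq_comm]
  convert! coeff_weightSeries_modEq_of_involutive (finite_preimage_add hf hf) Prod.swap_swap
    (fun p ↦ add_comm _ _) (fun i j hij ↦ congrArg Prod.fst hij) hrange N using 3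
  ext i
  simp only [comp_apply, two_mul]

/-- The involution of the solutions in odd positive integers of `u ^ 2 + 3 * v ^ 2 = N`, where
`u = 2 * i + 1` and `v = 2 * j + 1`, that sends `(u, v)` to whichever of
`(|u - 3 * v| / 2, (u + v) / 2)` and `((u + 3 * v) / 2, |u - v| / 2)` has odd entries. -/
def eisensteinInvolution (p : ℕ × ℕ) : ℕ × ℕ :=
  if Even (p.1 + p.2) then ((3 * p.2 - p.1 + 1 : ℤ).natAbs / 2, (p.1 + p.2) / 2)
  else ((p.1 + 3 * p.2 + 1) / 2, (p.1 - p.2 : ℤ).natAbs / 2)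

lemma eisensteinInvolution_involutive : Involutive eisensteinInvolution := by
  rintro ⟨i, j⟩
  simp only [eisensteinInvolution, Nat.even_iff]
  split_ifs <;> grind

lemma eisensteinInvolution_form (p : ℕ × ℕ) :
    (2 * (eisensteinInvolution p).1 + 1) ^ 2 + 3 * (2 * (eisensteinInvolution p).2 + 1) ^ 2 =
      (2 * p.1 + 1) ^ 2 + 3 * (2 * p.2 + 1) ^ 2 := by
  obtain ⟨i, j⟩ := p
  by_cases hij : Even (i + j)
  · simp only [eisensteinInvolution, if_pos hij]
    rw [Nat.even_iff] at hij
    have hu : 2 * ((3 * j - i + 1 : ℤ).natAbs / 2) + 1 = (3 * j - i + 1 : ℤ).natAbs := by omega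
    have hv : 2 * ((i + j) / 2) + 1 = i + j + 1 := by omega
    rw [hu, hv]
    zify
    rw [sq_abs]
    ring
  · simp only [eisensteinInvolution, if_neg hij]
    rw [Nat.even_iff] at hij
    have hu : 2 * ((i + 3 * j + 1) / 2) + 1 = i + 3 * j + 2 := by omega
    have hv : 2 * ((i - j : ℤ).natAbs / 2) + 1 = (i - j : ℤ).natAbs := by omega
    rw [hu, hv]
    zify
    rw [sq_abs]
    ring

lemma range_eq_fixedPoints_eisensteinInvolution :
    Set.range (Sum.elim (fun j ↦ (j, j)) fun j ↦ (3 * j + 1, j)) =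
      fixedPoints eisensteinInvolution := by
  ext ⟨i, j⟩
  have hrange : (i, j) ∈ Set.range (Sum.elim (fun j ↦ (j, j)) fun j ↦ (3 * j + 1, j)) ↔
      i = j ∨ i = 3 * j + 1 := by
    simp [eq_comm]
  rw [hrange, mem_fixedPoints, IsFixedPt, eisensteinInvolution]
  split_ifs with h <;> rw [Nat.even_iff] at h <;> rw [Prod.mk.injEq] <;> omega

lemma coeff_oddSquareSeries_mul_modEq {k : ℕ} (hk : 0 < k) (N : ℕ) :
    coeff N (oddSquareSeries k * oddSquareSeries (3 * k)) ≡
      coeff N (oddSquareSeries (4 * k) + oddSquareSeries (12 * k)) [ZMOD 2] := by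
  have hfin {c : ℕ} (hc : 0 < c) := finite_preimage_mul_odd_sq (Nat.mul_pos hc hk)
  have hinj : Injective (Sum.elim (fun j : ℕ ↦ (j, j)) fun j ↦ (3 * j + 1, j)) :=
    Injective.sumElim (fun i j h ↦ congrArg Prod.snd h) (fun i j h ↦ congrArg Prod.snd h)
      fun i j h ↦ by grind
  simp only [oddSquareSeries]
  rw [weightSeries_mul (finite_preimage_mul_odd_sq hk) (hfin three_pos),
    ← weightSeries_sumElim (hfin four_pos) (hfin (by decide))]
  convert! coeff_weightSeries_modEq_of_involutive
    (finite_preimage_add (finite_preimage_mul_odd_sq hk) (hfin three_pos))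
    eisensteinInvolution_involutive (fun p ↦ ?_) hinj range_eq_fixedPoints_eisensteinInvolution N
    using 3
  · ext (j | j) <;> simp only [comp_apply, Sum.elim_inl, Sum.elim_inr] <;> ring
  · linear_combination k * eisensteinInvolution_form p

end Parity

section EvenCoefficients

lemma coeff_two_mul_weightSeries_eq_zero {ι : Type*} {f : ι → ℕ} (hf : ∀ i, Odd (f i)) (n : ℕ) :
    coeff (2 * n) (weightSeries f) = 0 :=
  coeff_weightSeries_eq_zero fun i hi ↦ Nat.not_even_iff_odd.mpr (hf i) (hi ▸ even_two_mul n)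

lemma odd_mul_odd_sq {k : ℕ} (hk : Odd k) (j : ℕ) : Odd (k * (2 * j + 1) ^ 2) :=
  hk.mul (odd_two_mul_add_one j).pow

lemma coeff_two_mul_oddSquareSeries_eq_zero {k : ℕ} (hk : Odd k) (n : ℕ) :
    coeff (2 * n) (oddSquareSeries k) = 0 :=
  coeff_two_mul_weightSeries_eq_zero (odd_mul_odd_sq hk) n

lemma coeff_two_mul_evenSquareSeries_mul_oddSquareSeries_eq_zero {k : ℕ} (hk : Odd k) (n : ℕ) :
    coeff (2 * n) (evenSquareSeries k * oddSquareSeries k) = 0 := by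
  rw [evenSquareSeries, oddSquareSeries,
    weightSeries_mul (finite_preimage_mul_even_sq hk.pos) (finite_preimage_mul_odd_sq hk.pos)]
  refine coeff_two_mul_weightSeries_eq_zero (fun p ↦ ?_) n
  have heven : Even (k * (2 * p.1 + 2) ^ 2) :=
    ((even_two_mul (p.1 + 1)).pow_of_ne_zero two_ne_zero).mul_left k
  exact heven.add_odd (odd_mul_odd_sq hk p.2)

open Classical in
lemma coeff_mul_oddSquareSeries {k : ℕ} (hk : 0 < k) (n : ℕ) :
    coeff (k * n) (oddSquareSeries k) = if ∃ m, Odd m ∧ n = m ^ 2 then 1 else 0 := by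
  split_ifs with h
  · obtain ⟨_, ⟨i, rfl⟩, rfl⟩ := h
    have hfib : (fun j ↦ k * (2 * j + 1) ^ 2) ⁻¹' {k * (2 * i + 1) ^ 2} = {i} := by
      ext j
      simp [hk.ne']
    rw [oddSquareSeries, weightSeries, coeff_mk, hfib, Set.ncard_singleton, Nat.cast_one]
  · refine coeff_weightSeries_eq_zero fun j hj ↦ h ⟨2 * j + 1, odd_two_mul_add_one j, ?_⟩
    exact (Nat.eq_of_mul_eq_mul_left hk hj).symm

end EvenCoefficients

lemma Rbar_four_three_even_modEq_coeff {n : ℕ} (hn : 1 ≤ n) :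
    (Rbar 4 3 (2 * n) : ℤ) ≡ 4 * coeff (2 * n) (oddSquareSeries 2) [ZMOD 8] := by
  have hsquare : coeff (2 * n) (oddSquareSeries 1 ^ 2) ≡ coeff (2 * n) (oddSquareSeries 2)
      [ZMOD 2] := by
    simpa only [oddSquareSeries, one_mul] using
      coeff_weightSeries_sq_modEq (finite_preimage_mul_odd_sq one_pos) (2 * n)
  have hform : coeff (2 * n) (oddSquareSeries 1 * oddSquareSeries 3) ≡
      coeff (2 * n) (oddSquareSeries 4 + oddSquareSeries 12) [ZMOD 2] := by
    simpa only [mul_one] using coeff_oddSquareSeries_mul_modEq (k := 1) one_pos (2 * n)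
  obtain ⟨H, hH⟩ := eight_dvd_mk_Rbar_four_three_sub
  have hcoeff := congrArg (coeff (2 * n)) hH
  have hone : coeff (2 * n) (1 : ℤ⟦X⟧) = 0 := by rw [coeff_one, if_neg (by omega)]
  have hthree : Odd 3 := by decide
  have hnsmul (c : ℕ) (f : ℤ⟦X⟧) : coeff (2 * n) ((c : ℤ⟦X⟧) * f) = c * coeff (2 * n) f := by
    rw [← nsmul_eq_mul, map_nsmul, nsmul_eq_mul]
  simp only [map_sub, map_add, coeff_mk, hone, ← Nat.cast_ofNat (R := ℤ⟦X⟧), hnsmul,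
    coeff_two_mul_oddSquareSeries_eq_zero odd_one, coeff_two_mul_oddSquareSeries_eq_zero hthree,
    coeff_two_mul_evenSquareSeries_mul_oddSquareSeries_eq_zero odd_one,
    coeff_two_mul_evenSquareSeries_mul_oddSquareSeries_eq_zero hthree] at hcoeff
  rw [map_add] at hform
  rw [Int.ModEq] at *
  omega

open Classical in
theorem Rbar_four_three_even_mod_eight_general {n : ℕ} (hn : 1 ≤ n) :
    Rbar 4 3 (2 * n) ≡ if ∃ m, Odd m ∧ n = m ^ 2 then 4 else 0 [MOD 8] := by
  have h := Rbar_four_three_even_modEq_coeff hn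
  rw [coeff_mul_oddSquareSeries two_pos] at h
  rw [← Int.natCast_modEq_iff]
  split_ifs at h ⊢ <;> exact h

theorem Rbar_four_three_even_mod_eight (n : ℕ) (hn : 1 ≤ n)
    (h : ¬ ∃ m : ℕ, Odd m ∧ 0 < m ∧ n = m ^ 2) :
    Rbar 4 3 (2 * n) ≡ 0 [MOD 8] := by
  have hn' : ¬ ∃ m, Odd m ∧ n = m ^ 2 := fun ⟨m, hm, hnm⟩ ↦ h ⟨m, hm, hm.pos, hnm⟩
  simpa only [if_neg hn'] using Rbar_four_three_even_mod_eight_general hn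
end

section
/- For all integers n ≥ 1, the number of (4,9)-regular overpartitions satisfies R̄_{4,9}(4n) ≡ 0 (mod 12). -/
/-! Write `φ(q) = ∑ q^{x²}` over `x ∈ ℤ` and `ψ(q) = ∑ q^{n(n+1)/2}` over `n ≥ 0`. By Gauss's
identity `φ(-q) = ∏ (1 - qʲ) / (1 + qʲ)`, the generating function `F` of the `(4,m)`-regular
overpartitions satisfies `F · φ(-q) φ(-q^{4m}) = φ(-q⁴) φ(-q^m)` for odd `m`. Multiplying by
`φ(q) φ(q²)²` and using `φ(-q) φ(q) φ(q²)² = φ(-q⁴)⁴` makes the factor of `F` a series in `q⁴`.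
The dissections `φ(±q) = φ(q⁴) ± 2q ψ(q⁸)` and `φ(q²)² = φ(q⁴)² + 4q² ψ(q⁸)²` then isolate the
exponents divisible by four. For `m = 4k + 1` and `U₄F = ∑ Rbar 4 m (4n) qⁿ` this yields

`φ(-q)³ φ(-q^m) · U₄F = φ(q)³ φ(q^m) - 16 q^{k+1} ψ(q²)³ ψ(q^{2m})`.

Modulo `4` the series `φ(q)` and `φ(-q)` agree, so `U₄F ≡ 1`. Modulo `3` with `m = 9` we have
`f(q⁹) ≡ f(q)⁹`, and the two theta products are the cubes of the two sides of Jacobi's identity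
`φ(-q)⁴ = φ(q)⁴ - 16q ψ(q²)⁴`, so again `U₄F ≡ 1`.
-/

namespace RegularOverpartition

open Filter PowerSeries PowerSeries.WithPiTopology

/- `𝐕 k f` is `f(q^k)`; the operator is traditionally called `V_k`. -/
local notation:max "𝐕" k:max => PowerSeries.expand k (NeZero.ne (k : ℕ))

instance {R : Type*} [CommSemiring R] [CharZero R] : CharZero R⟦X⟧ :=
  charZero_of_injective_algebraMap (R := R) C_injective

instance {R : Type*} [CommSemiring R] (p : ℕ) [CharP R p] : CharP R⟦X⟧ p :=
  charP_of_injective_algebraMap (R := R) C_injective p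

section Expand

/-- The operator `U_k`, sending `∑ aₙ qⁿ` to `∑ a_{kn} qⁿ`. -/
noncomputable def atkinU {R : Type*} [Semiring R] (k : ℕ) : R⟦X⟧ →ₗ[R] R⟦X⟧ where
  toFun f := PowerSeries.mk fun n => coeff (k * n) f
  map_add' f g := by ext n; simp
  map_smul' c f := by ext n; simp

@[simp]
theorem coeff_atkinU {R : Type*} [Semiring R] (k n : ℕ) (f : R⟦X⟧) :
    coeff n (atkinU k f) = coeff (k * n) f :=
  coeff_mk n fun n => coeff (k * n) f

variable {R : Type*} [CommRing R] (k : ℕ) [NeZero k]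

theorem atkinU_mul_expand (f g : R⟦X⟧) : atkinU k (f * 𝐕 k g) = atkinU k f * g := by
  have hk : 0 < k := NeZero.pos k
  ext n
  simp only [coeff_atkinU, coeff_mul]
  refine (Finset.sum_of_injOn (fun p : ℕ × ℕ => (k * p.1, k * p.2)) ?_ ?_ ?_ ?_).symm
  · rintro ⟨a, b⟩ - ⟨c, d⟩ - h
    simpa [hk.ne'] using h
  · rintro ⟨a, b⟩ h
    simp only [SetLike.mem_coe, Finset.HasAntidiagonal.mem_antidiagonal] at h ⊢
    rw [← mul_add, h]
  · rintro ⟨a, b⟩ hab hnot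
    rw [Finset.HasAntidiagonal.mem_antidiagonal] at hab
    rw [coeff_expand_of_not_dvd, mul_zero]
    rintro ⟨d, rfl⟩
    obtain ⟨c, rfl⟩ : k ∣ a := (Nat.dvd_add_left ⟨d, rfl⟩).mp ⟨n, hab⟩
    refine hnot ⟨(c, d), ?_, rfl⟩
    simpa [← mul_add, hk.ne'] using hab
  · rintro ⟨a, b⟩ -
    simp only [coeff_expand_mul]

theorem atkinU_expand (f : R⟦X⟧) : atkinU k (𝐕 k f) = f := by
  ext n
  rw [coeff_atkinU, coeff_expand_mul]

theorem expand_injective : Function.Injective (𝐕 k : R⟦X⟧ → R⟦X⟧) :=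
  Function.LeftInverse.injective (atkinU_expand k)

theorem atkinU_X_pow_mul_mul_expand (j : ℕ) (f : R⟦X⟧) :
    atkinU k (X ^ (k * j) * 𝐕 k f) = X ^ j * f := by
  rw [← atkinU_expand k (X ^ j * f), map_mul (expand k _), map_pow, expand_X, pow_mul]

variable {k} in
theorem atkinU_X_pow_mul_expand_of_not_dvd {j : ℕ} (hj : ¬ k ∣ j) (f : R⟦X⟧) :
    atkinU k (X ^ j * 𝐕 k f) = 0 := by
  have : atkinU k (X ^ j : R⟦X⟧) = 0 := by
    ext n
    rw [coeff_atkinU, coeff_X_pow, if_neg fun h => hj ⟨n, h.symm⟩, map_zero]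
  rw [atkinU_mul_expand, this, zero_mul]

theorem expand_expand (m : ℕ) [NeZero m] (f : R⟦X⟧) : 𝐕 k (𝐕 m f) = 𝐕 (k * m) f :=
  (expand_mul k (NeZero.ne k) m (NeZero.ne m) f).symm

theorem expand_comm (m : ℕ) [NeZero m] (f : R⟦X⟧) : 𝐕 k (𝐕 m f) = 𝐕 m (𝐕 k f) := by
  simp only [expand_expand, mul_comm]

theorem continuous_expand [TopologicalSpace R] : Continuous (𝐕 k : R⟦X⟧ → R⟦X⟧) := by
  refine continuous_iff_continuousAt.mpr fun f => ?_
  refine (tendsto_iff_coeff_tendsto _ _ _ _).mpr fun d => ?_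
  simp only [coeff_expand]
  split_ifs
  · exact (continuous_coeff R (d / k)).continuousAt
  · exact tendsto_const_nhds

theorem hasSum_expand [TopologicalSpace R] {ι : Type*} {f : ι → R⟦X⟧} {a : R⟦X⟧}
    (h : HasSum f a) : HasSum (fun i => 𝐕 k (f i)) (𝐕 k a) :=
  h.map (𝐕 k) (continuous_expand k)

theorem expand_prime_pow_eq_pow (p r : ℕ) [Fact p.Prime] (f : (ZMod p)⟦X⟧) :
    𝐕 (p ^ r) f = f ^ p ^ r := by
  have h := MvPowerSeries.map_iterateFrobenius_expand p (NeZero.ne p) f r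
  have hid : iterateFrobenius (ZMod p) p r = RingHom.id _ := Subsingleton.elim _ _
  rwa [hid, MvPowerSeries.map_id] at h

end Expand

section Summation

theorem summable_mul_X_pow {R ι : Type*} [Semiring R] [TopologicalSpace R] (f : ι → R⟦X⟧)
    {e : ι → ℕ} (he : Tendsto e cofinite atTop) : Summable fun i => f i * X ^ e i := by
  refine (summable_iff_summable_coeff _).mpr fun d => summable_of_hasFiniteSupport ?_
  refine (he.eventually (eventually_gt_atTop d)).subset fun i hi hlt => hi ?_
  have hlt : d < e i := hlt
  simp [coeff_mul_X_pow', hlt.not_ge]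

theorem tendsto_natAbs_sq_cofinite : Tendsto (fun x : ℤ => x.natAbs ^ 2) cofinite atTop := by
  refine tendsto_atTop.mpr fun d => (Set.finite_Icc (-(d : ℤ)) d).subset fun x hx => ?_
  have : x.natAbs < d := (Nat.le_self_pow two_ne_zero _).trans_lt (not_le.mp hx)
  simp only [Set.mem_Icc]
  omega

theorem tendsto_add_cofinite {ι κ : Type*} {e : ι → ℕ} {e' : κ → ℕ} (he : Tendsto e cofinite atTop)
    (he' : Tendsto e' cofinite atTop) :
    Tendsto (fun x : ι × κ => e x.1 + e' x.2) cofinite atTop := by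
  refine tendsto_atTop.mpr fun d => ?_
  have hfin := he.eventually_ge_atTop d
  have hfin' := he'.eventually_ge_atTop d
  refine (Set.Finite.prod hfin hfin').subset fun x hx => ?_
  have hx : ¬ d ≤ e x.1 + e' x.2 := hx
  exact ⟨fun h => hx (le_add_right h), fun h => hx (le_add_left h)⟩

theorem hasSum_mul_X_pow_prod {R ι κ : Type*} [CommRing R] [TopologicalSpace R]
    [IsTopologicalRing R] [T2Space R] {f : ι → R⟦X⟧} {g : κ → R⟦X⟧} {e : ι → ℕ} {e' : κ → ℕ}
    {a b : R⟦X⟧}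
    (he : Tendsto e cofinite atTop) (he' : Tendsto e' cofinite atTop)
    (ha : HasSum (fun i => f i * X ^ e i) a) (hb : HasSum (fun j => g j * X ^ e' j) b) :
    HasSum (fun x : ι × κ => f x.1 * g x.2 * X ^ (e x.1 + e' x.2)) (a * b) := by
  have hsum := summable_mul_X_pow (fun x : ι × κ => f x.1 * g x.2) (tendsto_add_cofinite he he')
  have hterm (x : ι × κ) : f x.1 * g x.2 * X ^ (e x.1 + e' x.2) =
      (f x.1 * X ^ e x.1) * (g x.2 * X ^ e' x.2) := by
    rw [pow_add, mul_mul_mul_comm]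
  simp only [hterm] at hsum ⊢
  exact (ha.mul hb hsum :)

theorem hasSum_int_of_even_of_odd {M : Type*} [AddCommMonoid M] [TopologicalSpace M]
    [ContinuousAdd M] {f : ℤ → M} {a b : M} (ha : HasSum (fun j => f (2 * j)) a)
    (hb : HasSum (fun j => f (2 * j + 1)) b) : HasSum f (a + b) := by
  have h2 : Function.Injective fun j : ℤ => 2 * j := fun i j h => by simpa using h
  have h21 : Function.Injective fun j : ℤ => 2 * j + 1 := fun i j h => by simpa using h
  refine HasSum.add_isCompl ?_ (h2.hasSum_range_iff.mpr ha) (h21.hasSum_range_iff.mpr hb)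
  simpa [even_iff_exists_two_mul, Odd, Set.range, eq_comm] using Int.isCompl_even_odd

end Summation

section Theta

/-- Jacobi's theta series `φ(q) = ∑_{x ∈ ℤ} q^{x²}`. -/
noncomputable def theta : ℤ⟦X⟧ := ∑' x : ℤ, X ^ x.natAbs ^ 2

/-- The alternating theta series `φ(-q) = ∑_{x ∈ ℤ} (-1)^x q^{x²}`. -/
noncomputable def altTheta : ℤ⟦X⟧ := ∑' x : ℤ, ((x.negOnePow : ℤ) : ℤ⟦X⟧) * X ^ x.natAbs ^ 2

/-- The series `∑_{n ≥ 0} q^{n(n+1)}`, which is Ramanujan's `ψ(q²)`: it carries the odd squares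
occurring in `theta` and `altTheta`, since `(2n+1)² = 4n(n+1) + 1`. -/
noncomputable def pronicTheta : ℤ⟦X⟧ := ∑' n : ℕ, X ^ (n * (n + 1))

theorem hasSum_theta : HasSum (fun x : ℤ => (X ^ x.natAbs ^ 2 : ℤ⟦X⟧)) theta := by
  simpa only [theta, one_mul] using
    (summable_mul_X_pow (fun _ => (1 : ℤ⟦X⟧)) tendsto_natAbs_sq_cofinite).hasSum

theorem hasSum_altTheta :
    HasSum (fun x : ℤ => ((x.negOnePow : ℤ) : ℤ⟦X⟧) * X ^ x.natAbs ^ 2) altTheta :=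
  (summable_mul_X_pow _ tendsto_natAbs_sq_cofinite).hasSum

theorem hasSum_pronicTheta :
    HasSum (fun n : ℕ => (X ^ (n * (n + 1)) : ℤ⟦X⟧)) pronicTheta := by
  have hlim : Tendsto (fun n : ℕ => n * (n + 1)) cofinite atTop := by
    rw [Nat.cofinite_eq_atTop]
    exact tendsto_atTop_mono (fun n => Nat.le_mul_of_pos_right n n.succ_pos) tendsto_id
  simpa only [pronicTheta, one_mul] using (summable_mul_X_pow (fun _ => (1 : ℤ⟦X⟧)) hlim).hasSum

theorem hasSum_X_pow_even_sq :
    HasSum (fun j : ℤ => (X ^ (2 * j).natAbs ^ 2 : ℤ⟦X⟧)) (𝐕 4 theta) := by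
  convert! hasSum_expand 4 hasSum_theta using 2 with j
  rw [map_pow, expand_X, ← pow_mul, Int.natAbs_mul, mul_pow]
  rfl

theorem hasSum_X_pow_odd_sq :
    HasSum (fun j : ℤ => (X ^ (2 * j + 1).natAbs ^ 2 : ℤ⟦X⟧)) (2 * X * 𝐕 4 pronicTheta) := by
  have hhalf : HasSum (fun n : ℕ => (X ^ (2 * n + 1) ^ 2 : ℤ⟦X⟧)) (X * 𝐕 4 pronicTheta) := by
    convert! (hasSum_expand 4 hasSum_pronicTheta).mul_left X using 2 with n
    rw [map_pow, expand_X]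
    ring
  rw [mul_assoc, two_mul]
  refine HasSum.of_nat_of_neg_add_one ?_ ?_
  · convert hhalf using 4 with n
    omega
  · convert hhalf using 4 with n
    omega

theorem theta_eq : theta = 𝐕 4 theta + 2 * X * 𝐕 4 pronicTheta :=
  hasSum_theta.unique (hasSum_int_of_even_of_odd hasSum_X_pow_even_sq hasSum_X_pow_odd_sq)

theorem altTheta_eq : altTheta = 𝐕 4 theta - 2 * X * 𝐕 4 pronicTheta := by
  rw [sub_eq_add_neg]
  refine hasSum_altTheta.unique (hasSum_int_of_even_of_odd ?_ ?_)
  · simpa [Int.negOnePow_two_mul] using hasSum_X_pow_even_sq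
  · simpa [Int.negOnePow_two_mul_add_one] using hasSum_X_pow_odd_sq.neg

theorem hasSum_theta_sq :
    HasSum (fun v : ℤ × ℤ => (X ^ (v.1.natAbs ^ 2 + v.2.natAbs ^ 2) : ℤ⟦X⟧)) (theta ^ 2) := by
  have h : HasSum (fun x : ℤ => (1 * X ^ x.natAbs ^ 2 : ℤ⟦X⟧)) theta := by
    simpa only [one_mul] using hasSum_theta
  simpa only [one_mul, sq theta] using
    hasSum_mul_X_pow_prod tendsto_natAbs_sq_cofinite tendsto_natAbs_sq_cofinite h h

theorem hasSum_altTheta_sq :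
    HasSum (fun v : ℤ × ℤ =>
      (((v.1 + v.2).negOnePow : ℤ) : ℤ⟦X⟧) * X ^ (v.1.natAbs ^ 2 + v.2.natAbs ^ 2))
      (altTheta ^ 2) := by
  simpa only [Int.negOnePow_add, Units.val_mul, Int.cast_mul, sq altTheta] using
    hasSum_mul_X_pow_prod tendsto_natAbs_sq_cofinite tendsto_natAbs_sq_cofinite
      hasSum_altTheta hasSum_altTheta

/-- `x² + y²` with `x + y` even is `2(u² + v²)` for `x = u + v` and `y = u - v`. -/
theorem theta_sq_add_altTheta_sq : theta ^ 2 + altTheta ^ 2 = 2 * 𝐕 2 theta ^ 2 := by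
  let rot : ℤ × ℤ → ℤ × ℤ := fun v => (v.1 + v.2, v.1 - v.2)
  have hrot : Function.Injective rot := by
    rintro ⟨a, b⟩ ⟨c, d⟩ h
    simp only [rot, Prod.mk.injEq] at h ⊢
    omega
  refine (hasSum_theta_sq.add hasSum_altTheta_sq).unique ((hrot.hasSum_iff ?_).mp ?_)
  · rintro ⟨x, y⟩ hxy
    have hodd : Odd (x + y) := by
      refine Int.not_even_iff_odd.mp fun ⟨u, hu⟩ => hxy ⟨(u, x - u), ?_⟩
      simp only [rot, Prod.mk.injEq]
      omega
    simp [Int.negOnePow_odd _ hodd]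
  · convert! (hasSum_expand 2 hasSum_theta_sq).mul_left 2 using 2 with v
    · have hsq : (v.1 + v.2).natAbs ^ 2 + (v.1 - v.2).natAbs ^ 2 =
          2 * (v.1.natAbs ^ 2 + v.2.natAbs ^ 2) := by
        zify
        simp only [sq_abs]
        ring
      have hsign : v.1 + v.2 + (v.1 - v.2) = 2 * v.1 := by ring
      simp [rot, hsq, hsign, ← pow_mul, ← two_mul]
    · rw [map_pow]

theorem expand_two_theta_sq :
    𝐕 2 theta ^ 2 = 𝐕 4 theta ^ 2 + (2 * X * 𝐕 4 pronicTheta) ^ 2 := by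
  refine mul_left_cancel₀ (two_ne_zero (α := ℤ⟦X⟧)) ?_
  linear_combination -theta_sq_add_altTheta_sq +
    (theta + 𝐕 4 theta + 2 * X * 𝐕 4 pronicTheta) * theta_eq +
    (altTheta + 𝐕 4 theta - 2 * X * 𝐕 4 pronicTheta) * altTheta_eq

theorem theta_mul_altTheta : theta * altTheta = 𝐕 2 altTheta ^ 2 := by
  have h := congrArg (expand 2 two_ne_zero) theta_sq_add_altTheta_sq
  simp only [map_add, map_mul, map_pow, map_ofNat, expand_expand, Nat.reduceMul] at h
  refine mul_left_cancel₀ (two_ne_zero (α := ℤ⟦X⟧)) ?_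
  linear_combination (theta + altTheta + 2 * 𝐕 4 theta) * (theta_eq + altTheta_eq) -
    theta_sq_add_altTheta_sq - 2 * h

theorem altTheta_mul_theta_mul_expand_two_theta_sq :
    altTheta * theta * 𝐕 2 theta ^ 2 = 𝐕 4 altTheta ^ 4 := by
  have h := congrArg (expand 2 two_ne_zero) theta_mul_altTheta
  simp only [map_mul, map_pow, expand_expand, Nat.reduceMul] at h
  linear_combination 𝐕 2 theta ^ 2 * theta_mul_altTheta +
    (𝐕 2 theta * 𝐕 2 altTheta + 𝐕 4 altTheta ^ 2) * h

theorem theta_pow_four_sub : theta ^ 4 - 16 * X * pronicTheta ^ 4 = altTheta ^ 4 := by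
  refine expand_injective 4 ?_
  simp only [map_sub, map_mul, map_pow, map_ofNat, expand_X]
  linear_combination altTheta_mul_theta_mul_expand_two_theta_sq -
    altTheta * theta * expand_two_theta_sq -
    (𝐕 4 theta ^ 2 + (2 * X * 𝐕 4 pronicTheta) ^ 2) *
      (theta * altTheta_eq + (𝐕 4 theta - 2 * X * 𝐕 4 pronicTheta) * theta_eq)

end Theta

section PartsProduct

variable {R : Type*} [CommRing R] [TopologicalSpace R]

/-- The product `∏_{i ≥ 1, p i} (1 + c qⁱ)`. For `c = 1` it generates the partitions into distinct
parts satisfying `p`, and for `c = -1` it is the inverse of the generating function of all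
partitions into such parts. -/
noncomputable def partsProduct (c : R) (p : ℕ → Prop) [DecidablePred p] : R⟦X⟧ :=
  ∏' i : ℕ, if p (i + 1) then 1 + C c * X ^ (i + 1) else 1

theorem hasProd_partsProduct (c : R) (p : ℕ → Prop) [DecidablePred p] :
    HasProd (fun i : ℕ => if p (i + 1) then 1 + C c * X ^ (i + 1) else 1)
      (partsProduct c p) := by
  have hlim : Tendsto (fun i => (if p (i + 1) then C c * X ^ (i + 1) else 0 : R⟦X⟧).order) atTop
      (nhds ⊤) := by
    refine ENat.tendsto_nhds_top_iff_natCast_lt.mpr fun n => ?_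
    filter_upwards [eventually_ge_atTop n] with i hi
    refine (Nat.cast_lt.mpr (Nat.lt_succ_of_le hi)).trans_le (nat_le_order _ _ fun j hj => ?_)
    split_ifs <;> simp [coeff_X_pow, hj.ne]
  have hterm (i : ℕ) : (if p (i + 1) then 1 + C c * X ^ (i + 1) else 1 : R⟦X⟧) =
      1 + if p (i + 1) then C c * X ^ (i + 1) else 0 := by
    split_ifs <;> simp
  have hmult := multipliable_one_add_of_tendsto_order_atTop_nhds_top R hlim
  simp only [← hterm] at hmult
  exact hmult.hasProd

variable [T2Space R]

theorem constantCoeff_partsProduct (c : R) (p : ℕ → Prop) [DecidablePred p] :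
    constantCoeff (partsProduct c p) = 1 := by
  refine ((hasProd_partsProduct c p).map (constantCoeff (R := R))
    (continuous_constantCoeff R)).unique ?_
  convert! hasProd_one with i
  simp [apply_ite]

theorem isUnit_partsProduct (c : R) (p : ℕ → Prop) [DecidablePred p] :
    IsUnit (partsProduct c p) := by
  rw [isUnit_iff_constantCoeff, constantCoeff_partsProduct]
  exact isUnit_one

theorem partsProduct_dvd (c : R) (k : ℕ) [NeZero k] :
    partsProduct c (k ∣ ·) = 𝐕 k (partsProduct c fun _ => True) := by
  have hinj : Function.Injective fun i : ℕ => k * (i + 1) - 1 := fun i j h => by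
    have hpos (i : ℕ) : 0 < k * (i + 1) := Nat.mul_pos (NeZero.pos k) i.succ_pos
    have := hpos i
    have := hpos j
    have heq : k * (i + 1) = k * (j + 1) := by simp only at h; omega
    simpa [NeZero.ne k] using heq
  refine (hasProd_partsProduct c _).unique ((hinj.hasProd_iff ?_).mp ?_)
  · intro i hi
    refine if_neg fun ⟨j, hj⟩ => hi ⟨j - 1, ?_⟩
    have : j ≠ 0 := by rintro rfl; simp at hj
    simp only [Nat.sub_add_cancel (Nat.one_le_iff_ne_zero.mpr this)]
    omega
  · convert! (hasProd_partsProduct c _).map (𝐕 k) (continuous_expand k)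
    ext1 i
    have hsub : k * (i + 1) - 1 + 1 = k * (i + 1) :=
      Nat.sub_add_cancel (Nat.mul_pos (NeZero.pos k) i.succ_pos)
    simp [Function.comp_apply, hsub, expand_C, expand_X, pow_mul]

theorem partsProduct_not_dvd_mul [IsTopologicalRing R] (c : R) {ℓ μ : ℕ} (h : ℓ.Coprime μ) :
    partsProduct c (fun i => ¬ ℓ ∣ i ∧ ¬ μ ∣ i) *
        (partsProduct c (ℓ ∣ ·) * partsProduct c (μ ∣ ·)) =
      partsProduct c (fun _ => True) * partsProduct c (ℓ * μ ∣ ·) := by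
  have hregular := hasProd_partsProduct c fun i => ¬ ℓ ∣ i ∧ ¬ μ ∣ i
  have hdvd := (hasProd_partsProduct c (ℓ ∣ ·)).mul (hasProd_partsProduct c (μ ∣ ·))
  have hall := hasProd_partsProduct c fun _ => True
  refine (hregular.mul hdvd).unique ?_
  convert! hall.mul (hasProd_partsProduct c (ℓ * μ ∣ ·)) using 2 with i
  have hmul : ℓ * μ ∣ i + 1 ↔ ℓ ∣ i + 1 ∧ μ ∣ i + 1 :=
    ⟨fun hd => ⟨dvd_of_mul_right_dvd hd, dvd_of_mul_left_dvd hd⟩,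
      fun hd => h.mul_dvd_of_dvd_of_dvd hd.1 hd.2⟩
  by_cases hℓ : ℓ ∣ i + 1 <;> by_cases hμ : μ ∣ i + 1 <;> simp [hℓ, hμ, hmul]

theorem mk_card_mul_partsProduct_neg_one [IsTopologicalRing R] (p : ℕ → Prop) [DecidablePred p] :
    (PowerSeries.mk fun n => (Fintype.card
      {P : n.Partition // ∀ i ∈ P.parts, p i} : R)) * partsProduct (-1) p = 1 := by
  have hgen := Nat.Partition.hasProd_powerSeriesMk_card_restricted R p
  simp only [Fintype.card_subtype]
  refine (hgen.mul (hasProd_partsProduct (-1) p)).unique ?_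
  convert! hasProd_one with i
  split_ifs
  · simp_rw [pow_mul, map_neg, map_one, neg_one_mul, ← sub_eq_add_neg]
    exact tsum_pow_mul_one_sub_of_constantCoeff_eq_zero (by simp)
  · simp

theorem mk_card_nodup_eq_partsProduct (p : ℕ → Prop) [DecidablePred p] :
    (PowerSeries.mk fun n => (Fintype.card
      {P : n.Partition // P.parts.Nodup ∧ ∀ i ∈ P.parts, p i} : R)) = partsProduct 1 p := by
  have hgen := Nat.Partition.hasProd_genFun (R := R) fun i m => if p i ∧ m ≤ 1 then 1 else 0
  have hcoeff : (PowerSeries.mk fun n => (Fintype.card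
      {P : n.Partition // P.parts.Nodup ∧ ∀ i ∈ P.parts, p i} : R)) =
      Nat.Partition.genFun fun i m => if p i ∧ m ≤ 1 then 1 else 0 := by
    ext n
    have hiff (P : n.Partition) : (P.parts.Nodup ∧ ∀ i ∈ P.parts, p i) ↔
        ∀ i ∈ P.parts, p i ∧ P.parts.count i ≤ 1 := by
      rw [Multiset.nodup_iff_count_le_one]
      refine ⟨fun h i hi => ⟨h.2 i hi, h.1 i⟩, fun h => ⟨fun i => ?_, fun i hi => (h i hi).1⟩⟩
      by_cases hi : i ∈ P.parts
      · exact (h i hi).2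
      · simp [Multiset.count_eq_zero_of_notMem hi]
    rw [coeff_mk, Nat.Partition.coeff_genFun]
    simp only [Finsupp.prod, Finset.prod_boole]
    simp only [Fintype.card_subtype, hiff, Finset.card_filter, Multiset.toFinsupp_support,
      Multiset.mem_toFinset, Multiset.toFinsupp_apply, Nat.cast_sum, Nat.cast_ite, Nat.cast_one,
      Nat.cast_zero]
  rw [hcoeff]
  refine hgen.unique ?_
  convert! hasProd_partsProduct (1 : R) p using 2 with i
  rw [tsum_eq_single 0 fun m hm => by simp [hm]]
  split_ifs <;> simp_all

end PartsProduct

section Gauss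

theorem prod_one_add_pow_mul_alternating_sum {R : Type*} [CommRing R] (q : R) (n : ℕ) :
    (∏ j ∈ Finset.range n, (1 + q ^ (j + 1))) *
        (1 + 2 * ∑ s ∈ Finset.range n, (-1) ^ (s + 1) * q ^ (s + 1) ^ 2) =
      ∏ j ∈ Finset.range n, (1 - q ^ (j + 1)) +
        2 * ∑ s ∈ Finset.range n, (-1) ^ (s + 1) * (∏ j ∈ Finset.Ico (s + 1) n, (1 - q ^ (j + 1))) *
          (∏ j ∈ Finset.range s, (1 + q ^ (j + 1))) * q ^ ((s + 1) * (n + 1)) := by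
  induction n with
  | zero => simp
  | succ n ih =>
    -- Passing from `n` to `n + 1` multiplies each error term by `1 + q ^ (n + 1)` and adds a
    -- telescoping difference of `g`.
    let g (s : ℕ) : R := (-1) ^ (s + 1) * (∏ j ∈ Finset.Ico s n, (1 - q ^ (j + 1))) *
      (∏ j ∈ Finset.range s, (1 + q ^ (j + 1))) * q ^ ((s + 1) * (n + 1))
    have hstep : ∀ s ∈ Finset.range n,
        (-1) ^ (s + 1) * (∏ j ∈ Finset.Ico (s + 1) (n + 1), (1 - q ^ (j + 1))) *
            (∏ j ∈ Finset.range s, (1 + q ^ (j + 1))) * q ^ ((s + 1) * (n + 1 + 1)) =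
          (1 + q ^ (n + 1)) *
              ((-1) ^ (s + 1) * (∏ j ∈ Finset.Ico (s + 1) n, (1 - q ^ (j + 1))) *
                (∏ j ∈ Finset.range s, (1 + q ^ (j + 1))) * q ^ ((s + 1) * (n + 1))) +
            (g (s + 1) - g s) := by
      intro s hs
      have hsn : s < n := Finset.mem_range.mp hs
      simp only [g]
      rw [Finset.prod_Ico_succ_top hsn, Finset.prod_eq_prod_Ico_succ_bot hsn,
        Finset.prod_range_succ]
      ring
    have hg_zero : g 0 = -(∏ j ∈ Finset.range n, (1 - q ^ (j + 1))) * q ^ (n + 1) := by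
      simp [g]
    have hg_last : g n = (-1) ^ (n + 1) * (∏ j ∈ Finset.range n, (1 + q ^ (j + 1))) *
        q ^ (n + 1) ^ 2 := by
      simp [g, sq]
    rw [Finset.sum_range_succ, Finset.sum_range_succ _ n, Finset.sum_congr rfl hstep,
      Finset.sum_add_distrib, Finset.sum_range_sub g, ← Finset.mul_sum, hg_zero, hg_last,
      Finset.prod_range_succ, Finset.prod_range_succ, Finset.Ico_self, Finset.prod_empty]
    linear_combination (1 + q ^ (n + 1)) * ih

theorem pow_succ_dvd_prod_mul_sum_sub_prod {R : Type*} [CommRing R] (q : R) (n : ℕ) :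
    q ^ (n + 1) ∣ (∏ j ∈ Finset.range n, (1 + q ^ (j + 1))) *
        (1 + 2 * ∑ s ∈ Finset.range n, (-1) ^ (s + 1) * q ^ (s + 1) ^ 2) -
      ∏ j ∈ Finset.range n, (1 - q ^ (j + 1)) := by
  rw [prod_one_add_pow_mul_alternating_sum, add_sub_cancel_left]
  refine Dvd.dvd.mul_left (Finset.dvd_sum fun s _ => Dvd.dvd.mul_left (pow_dvd_pow q ?_) _) _
  exact Nat.le_mul_of_pos_left (n + 1) s.succ_pos

theorem tendsto_altTheta :
    Tendsto (fun n : ℕ => 1 + 2 * ∑ s ∈ Finset.range n, (-1) ^ (s + 1) * (X : ℤ⟦X⟧) ^ (s + 1) ^ 2)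
      atTop (nhds altTheta) := by
  have hpairs := hasSum_altTheta.nat_add_neg.tendsto_sum_nat
  have h := (hpairs.comp (tendsto_add_atTop_nat 1)).sub_const 1
  convert! h using 2 with n
  · simp only [Function.comp_apply, Finset.sum_range_succ', Int.negOnePow_neg, Int.natAbs_neg,
      Int.natAbs_natCast, Int.coe_negOnePow_natCast, ← two_mul, ← Finset.mul_sum, Int.cast_pow,
      Int.cast_neg, Int.cast_one, pow_zero, zero_pow two_ne_zero, mul_one]
    ring
  · simp

theorem partsProduct_one_mul_altTheta :
    partsProduct 1 (fun _ => True) * altTheta = partsProduct (-1) fun _ => True := by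
  have hadd := (hasProd_partsProduct (1 : ℤ) fun _ => True).tendsto_prod_nat
  have hsub := (hasProd_partsProduct (-1 : ℤ) fun _ => True).tendsto_prod_nat
  simp only [if_true, map_neg, map_one, one_mul, neg_one_mul, ← sub_eq_add_neg] at hadd hsub
  have hzero := (hadd.mul tendsto_altTheta).sub hsub
  refine sub_eq_zero.mp (tendsto_nhds_unique hzero ?_)
  refine (tendsto_iff_coeff_tendsto _ _ _ _).mpr fun d => tendsto_atTop_of_eventually_const
    (i₀ := d) fun n hn => ?_
  rw [map_zero]
  exact X_pow_dvd_iff.mp (pow_succ_dvd_prod_mul_sum_sub_prod X n) d (Nat.lt_succ_of_le hn)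

theorem isUnit_altTheta : IsUnit altTheta := by
  refine isUnit_of_mul_isUnit_right (x := partsProduct 1 fun _ => True) ?_
  rw [partsProduct_one_mul_altTheta]
  exact isUnit_partsProduct _ _

end Gauss

section Rbar

/-- The generating function `∑ Rbar ℓ μ n qⁿ` of the `(ℓ,μ)`-regular overpartitions. -/
noncomputable def rbarSeries (ℓ μ : ℕ) : ℤ⟦X⟧ := PowerSeries.mk fun n => (Rbar ℓ μ n : ℤ)

theorem rbarSeries_eq_mul (ℓ μ : ℕ) :
    rbarSeries ℓ μ = (PowerSeries.mk fun n => (regularCount ℓ μ n : ℤ)) *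
      PowerSeries.mk fun n => (regularDistinctCount ℓ μ n : ℤ) := by
  ext n
  simp [rbarSeries, Rbar, coeff_mul]

theorem rbarSeries_mul_partsProduct_neg_one (ℓ μ : ℕ) :
    rbarSeries ℓ μ * partsProduct (-1) (fun i => ¬ ℓ ∣ i ∧ ¬ μ ∣ i) =
      partsProduct 1 fun i => ¬ ℓ ∣ i ∧ ¬ μ ∣ i := by
  have hregular := mk_card_mul_partsProduct_neg_one (R := ℤ) fun i => ¬ ℓ ∣ i ∧ ¬ μ ∣ i
  have hdistinct := mk_card_nodup_eq_partsProduct (R := ℤ) fun i => ¬ ℓ ∣ i ∧ ¬ μ ∣ i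
  rw [rbarSeries_eq_mul, mul_right_comm]
  unfold regularCount regularDistinctCount
  rw [hregular, one_mul, hdistinct]

theorem rbarSeries_mul_altTheta {ℓ μ : ℕ} [NeZero ℓ] [NeZero μ] (h : ℓ.Coprime μ) :
    rbarSeries ℓ μ * (altTheta * 𝐕 (ℓ * μ) altTheta) = 𝐕 ℓ altTheta * 𝐕 μ altTheta := by
  have hseries := rbarSeries_mul_partsProduct_neg_one ℓ μ
  have hneg := partsProduct_not_dvd_mul (-1 : ℤ) h
  have hpos := partsProduct_not_dvd_mul (1 : ℤ) h
  simp only [partsProduct_dvd, ← partsProduct_one_mul_altTheta, map_mul] at hneg hpos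
  have hunit := isUnit_partsProduct (1 : ℤ) fun _ => True
  refine (hunit.mul (hunit.map (𝐕 (ℓ * μ)))).mul_right_cancel ?_
  linear_combination (𝐕 ℓ (partsProduct 1 fun _ => True) * 𝐕 ℓ altTheta *
      (𝐕 μ (partsProduct 1 fun _ => True) * 𝐕 μ altTheta)) * hseries -
    rbarSeries ℓ μ * hneg + 𝐕 ℓ altTheta * 𝐕 μ altTheta * hpos

end Rbar

section Congruences

theorem rbarSeries_four_mul_expand_four (k : ℕ) :
    rbarSeries 4 (4 * k + 1) * 𝐕 4 (altTheta ^ 3 * 𝐕 (4 * k + 1) altTheta) =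
      𝐕 (4 * k + 1) altTheta * theta * 𝐕 2 theta ^ 2 := by
  have hcoprime : Nat.Coprime 4 (4 * k + 1) := by simp
  have h := rbarSeries_mul_altTheta hcoprime
  refine (isUnit_altTheta.map (𝐕 4)).mul_right_cancel ?_
  simp only [map_mul, map_pow, expand_expand]
  linear_combination theta * 𝐕 2 theta ^ 2 * h -
    rbarSeries 4 (4 * k + 1) * 𝐕 (4 * (4 * k + 1)) altTheta *
      altTheta_mul_theta_mul_expand_two_theta_sq

theorem expand_altTheta_eq (m : ℕ) [NeZero m] :
    𝐕 m altTheta = 𝐕 4 (𝐕 m theta) - 2 * X ^ m * 𝐕 4 (𝐕 m pronicTheta) := by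
  conv_lhs => rw [altTheta_eq]
  simp only [map_sub, map_mul, map_ofNat, expand_X, expand_comm m 4]

theorem theta_mul_expand_two_theta_sq :
    theta * 𝐕 2 theta ^ 2 =
      𝐕 4 (theta ^ 3) + 2 * X * 𝐕 4 (theta ^ 2 * pronicTheta) +
        4 * X ^ 2 * 𝐕 4 (theta * pronicTheta ^ 2) + 8 * X ^ 3 * 𝐕 4 (pronicTheta ^ 3) := by
  simp only [map_mul, map_pow]
  linear_combination theta * expand_two_theta_sq +
    (𝐕 4 theta ^ 2 + (2 * X * 𝐕 4 pronicTheta) ^ 2) * theta_eq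

theorem atkinU_four_expand_altTheta_mul (k : ℕ) :
    atkinU 4 (𝐕 (4 * k + 1) altTheta * theta * 𝐕 2 theta ^ 2) =
      theta ^ 3 * 𝐕 (4 * k + 1) theta -
        16 * X ^ (k + 1) * (pronicTheta ^ 3 * 𝐕 (4 * k + 1) pronicTheta) := by
  set Q := 𝐕 (4 * k + 1) theta with hQ
  set S := 𝐕 (4 * k + 1) pronicTheta with hS
  have hdissect : 𝐕 (4 * k + 1) altTheta * theta * 𝐕 2 theta ^ 2 =
      𝐕 4 (theta ^ 3 * Q) - X ^ (4 * (k + 1)) * 𝐕 4 (16 * (pronicTheta ^ 3 * S)) +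
        X ^ 1 * 𝐕 4 (2 * theta ^ 2 * pronicTheta * Q - X ^ k * (2 * theta ^ 3 * S)) +
        X ^ 2 * 𝐕 4 (4 * theta * pronicTheta ^ 2 * Q -
          X ^ k * (4 * theta ^ 2 * pronicTheta * S)) +
        X ^ 3 * 𝐕 4 (8 * pronicTheta ^ 3 * Q - X ^ k * (8 * theta * pronicTheta ^ 2 * S)) := by
    rw [mul_assoc, theta_mul_expand_two_theta_sq, expand_altTheta_eq, ← hQ, ← hS]
    simp only [map_sub, map_mul, map_pow, map_ofNat, expand_X, ← pow_mul]
    ring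
  rw [hdissect]
  simp only [map_add (atkinU 4), map_sub (atkinU 4), atkinU_expand, atkinU_X_pow_mul_mul_expand,
    atkinU_X_pow_mul_expand_of_not_dvd (k := 4) (j := 1) (by norm_num),
    atkinU_X_pow_mul_expand_of_not_dvd (k := 4) (j := 2) (by norm_num),
    atkinU_X_pow_mul_expand_of_not_dvd (k := 4) (j := 3) (by norm_num)]
  ring

theorem altTheta_pow_three_mul_atkinU_four (k : ℕ) :
    altTheta ^ 3 * 𝐕 (4 * k + 1) altTheta * atkinU 4 (rbarSeries 4 (4 * k + 1)) =
      theta ^ 3 * 𝐕 (4 * k + 1) theta -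
        16 * X ^ (k + 1) * (pronicTheta ^ 3 * 𝐕 (4 * k + 1) pronicTheta) := by
  rw [← atkinU_four_expand_altTheta_mul, ← rbarSeries_four_mul_expand_four, atkinU_mul_expand,
    mul_comm]

theorem dvd_Rbar_of_map_atkinU_eq_one {N k ℓ μ n : ℕ} (hn : n ≠ 0)
    (h : PowerSeries.map (Int.castRingHom (ZMod N)) (atkinU k (rbarSeries ℓ μ)) = 1) :
    N ∣ Rbar ℓ μ (k * n) := by
  have hcoeff := congrArg (coeff n) h
  rw [coeff_map, coeff_atkinU, coeff_one, if_neg hn] at hcoeff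
  simpa [rbarSeries, ZMod.natCast_eq_zero_iff] using hcoeff

theorem four_dvd_Rbar_four (k : ℕ) {n : ℕ} (hn : n ≠ 0) : 4 ∣ Rbar 4 (4 * k + 1) (4 * n) := by
  refine dvd_Rbar_of_map_atkinU_eq_one hn ?_
  set r := PowerSeries.map (Int.castRingHom (ZMod 4))
  have hfour : (4 : (ZMod 4)⟦X⟧) = 0 := CharP.ofNat_eq_zero _ 4
  have htheta : r theta = r altTheta := by
    have hsub : theta - altTheta = 4 * (X * 𝐕 4 pronicTheta) := by
      linear_combination theta_eq - altTheta_eq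
    have := congrArg r hsub
    rwa [map_sub, map_mul, map_ofNat, hfour, zero_mul, sub_eq_zero] at this
  have hexpand : r (𝐕 (4 * k + 1) theta) = r (𝐕 (4 * k + 1) altTheta) := by
    simp only [r, PowerSeries.map_expand]
    exact congrArg _ htheta
  have h := congrArg r (altTheta_pow_three_mul_atkinU_four k)
  simp only [map_mul, map_sub, map_pow, map_ofNat, htheta, hexpand] at h
  have hunit := ((isUnit_altTheta.pow 3).mul (isUnit_altTheta.map (𝐕 (4 * k + 1)))).map r
  refine hunit.mul_left_cancel ?_
  rw [map_mul, map_pow]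
  linear_combination h - 4 * r X ^ (k + 1) *
    (r pronicTheta ^ 3 * r (𝐕 (4 * k + 1) pronicTheta)) * hfour

theorem three_dvd_Rbar_four_nine {n : ℕ} (hn : n ≠ 0) : 3 ∣ Rbar 4 9 (4 * n) := by
  refine dvd_Rbar_of_map_atkinU_eq_one hn ?_
  set r := PowerSeries.map (Int.castRingHom (ZMod 3))
  have hsixteen : (16 : (ZMod 3)⟦X⟧) = 1 := by
    linear_combination 5 * CharP.ofNat_eq_zero (ZMod 3)⟦X⟧ 3
  have hexpand (f : ℤ⟦X⟧) : r (𝐕 9 f) = r f ^ 9 := by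
    simp only [r, PowerSeries.map_expand]
    exact expand_prime_pow_eq_pow 3 2 _
  have h := congrArg r (altTheta_pow_three_mul_atkinU_four 2)
  have hjacobi := congrArg r theta_pow_four_sub
  simp only [map_mul, map_sub, map_pow, map_ofNat, hexpand, hsixteen, one_mul, Nat.reduceMul,
    Nat.reduceAdd] at h hjacobi
  have hcube : r theta ^ 12 - r X ^ 3 * r pronicTheta ^ 12 = r altTheta ^ 12 := by
    have := congrArg (· ^ 3) hjacobi
    simpa only [sub_pow_char, mul_pow, ← pow_mul, Nat.reduceMul] using this
  refine ((isUnit_altTheta.map r).pow 12).mul_left_cancel ?_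
  linear_combination h + hcube

end Congruences

end RegularOverpartition

theorem Rbar_four_nine_four_n_mod_twelve (n : ℕ) (hn : 1 ≤ n) :
    Rbar 4 9 (4 * n) ≡ 0 [MOD 12] := by
  have hn : n ≠ 0 := Nat.one_le_iff_ne_zero.mp hn
  have hcoprime : Nat.Coprime 4 3 := by norm_num
  exact Nat.modEq_zero_iff_dvd.mpr <| hcoprime.mul_dvd_of_dvd_of_dvd
    (RegularOverpartition.four_dvd_Rbar_four 2 hn)
    (RegularOverpartition.three_dvd_Rbar_four_nine hn)
end
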